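/- arXiv:0810.2840 — 2 statements merged into one kernel-verified Lean document; each statement's English description precedes it below -/
import Mathlib

section
/- Fix n ≥ 0 and d ≥ 1, and embed ℂP^n into ℂP^{n+1} as the hyperplane {x_{n+1} = 0}. Then the induced inclusion SP^d(ℂP^n) ↪ SP^d(ℂP^{n+1}) induces isomorphisms π_k(SP^d(ℂP^n)) ≅ π_k(SP^d(ℂP^{n+1})) for all 0 ≤ k ≤ 2n. -/
open scoped Topology

/-- Complex projective `n`-space `ℂP^n`: the quotient of `ℂ^{n+1} ∖ {0}` by the scalar
action of `ℂ*`, with the quotient topology. -/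
def CP (n : ℕ) : Type := Projectivization ℂ (Fin (n + 1) → ℂ)

instance (n : ℕ) : TopologicalSpace (CP n) :=
  inferInstanceAs (TopologicalSpace (Quotient (projectivizationSetoid ℂ (Fin (n + 1) → ℂ))))

/-- The setoid on `X^d` identifying tuples up to the permutation action of the symmetric
group on `d` letters. -/
def SPSetoid (X : Type) (d : ℕ) : Setoid (Fin d → X) where
  r f g := ∃ σ : Equiv.Perm (Fin d), f ∘ σ = g
  iseqv := by
    refine ⟨fun f => ⟨Equiv.refl _, rfl⟩, ?_, ?_⟩
    · rintro f g ⟨σ, rfl⟩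
      exact ⟨σ.symm, by funext i; simp⟩
    · rintro f g h ⟨σ, rfl⟩ ⟨τ, rfl⟩
      exact ⟨τ.trans σ, rfl⟩

/-- The `d`-th symmetric product `SP^d(X)`: the quotient of `X^d` by the permutation action
of the symmetric group on `d` letters, with the quotient topology. -/
def SP (X : Type) [TopologicalSpace X] (d : ℕ) : Type := Quotient (SPSetoid X d)

instance (X : Type) [TopologicalSpace X] (d : ℕ) : TopologicalSpace (SP X d) :=
  inferInstanceAs (TopologicalSpace (Quotient (SPSetoid X d)))

/-- The point `p₀ = [0 : ⋯ : 0 : 1] ∈ ℂP^{n+1}`. -/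
noncomputable def lastPoint (n : ℕ) : CP (n + 1) :=
  Projectivization.mk ℂ (Pi.single (Fin.last (n + 1)) (1 : ℂ))
    (fun h => one_ne_zero (α := ℂ) (by
      have := congrFun h (Fin.last (n + 1))
      rwa [Pi.single_eq_same] at this))

/-- An unordered `d`-tuple `s ∈ SP^d(X)` avoids `a : X` if none of its entries equals `a`. -/
def SPAvoids {X : Type} [TopologicalSpace X] {d : ℕ} (s : SP X d) (a : X) : Prop :=
  ∀ f : Fin d → X, Quotient.mk (SPSetoid X d) f = s → ∀ i, f i ≠ a

/-- The map induced on homotopy groups (based homotopy classes of maps from the `N`-cube,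
boundary to the basepoint) by a continuous map, given by postcomposition. -/
noncomputable def HomotopyGroup.inducedMap (N : Type) {X Y : Type}
    [TopologicalSpace X] [TopologicalSpace Y] (f : C(X, Y)) (x : X) :
    HomotopyGroup N X x → HomotopyGroup N Y (f x) :=
  Quotient.map
    (fun p => ⟨f.comp p.1, fun y hy => by
      simp only [ContinuousMap.comp_apply]
      rw [p.2 y hy]⟩)
    (fun p q h => h.map fun H => H.compContinuousMap f)

section Aux
open Set Filter Function

/-- The quotient projection onto the symmetric product. -/
def spq {X : Type} [TopologicalSpace X] {d : ℕ} (f : Fin d → X) : SP X d :=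
  Quotient.mk (SPSetoid X d) f

theorem spq_eq {X : Type} [TopologicalSpace X] {d : ℕ} {f g : Fin d → X} :
    (spq f : SP X d) = spq g ↔ ∃ σ : Equiv.Perm (Fin d), f ∘ σ = g :=
  Quotient.eq (r := SPSetoid X d)

theorem spq_surj {X : Type} [TopologicalSpace X] {d : ℕ} (s : SP X d) : ∃ f, spq f = s :=
  Quotient.exists_rep s

theorem spq_open {X : Type} [TopologicalSpace X] {d : ℕ} :
    IsOpenQuotientMap (spq : (Fin d → X) → SP X d) where
  surjective := spq_surj
  continuous := continuous_quot_mk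
  isOpenMap U hU := by
    change IsOpen ((spq : (Fin d → X) → SP X d) ⁻¹' (spq '' U))
    have : ((spq : (Fin d → X) → SP X d) ⁻¹' (spq '' U)) =
        ⋃ σ : Equiv.Perm (Fin d), (fun f : Fin d → X => f ∘ σ) ⁻¹' U := by
      ext f
      simp only [mem_preimage, mem_image, mem_iUnion]
      constructor
      · rintro ⟨g, hg, h⟩
        obtain ⟨σ, rfl⟩ := spq_eq.1 h.symm
        exact ⟨σ, hg⟩
      · rintro ⟨σ, h⟩
        exact ⟨_, h, (spq_eq.2 ⟨σ, rfl⟩).symm⟩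
    rw [this]
    refine isOpen_iUnion fun σ => hU.preimage ?_
    exact continuous_pi fun i => continuous_apply (σ i)

/-- Lift a symmetric function. -/
def spLift {X : Type} [TopologicalSpace X] {d : ℕ} {Y : Type} (h : (Fin d → X) → Y)
    (hh : ∀ f (σ : Equiv.Perm (Fin d)), h (f ∘ σ) = h f) (s : SP X d) : Y :=
  Quotient.lift (s := SPSetoid X d) h (by rintro f g ⟨σ, rfl⟩; exact (hh f σ).symm) s

@[simp] theorem spLift_spq {X : Type} [TopologicalSpace X] {d : ℕ} {Y : Type}
    (h : (Fin d → X) → Y) (hh) (f : Fin d → X) : spLift h hh (spq f) = h f := rfl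

theorem spLift_cont {X : Type} [TopologicalSpace X] {d : ℕ} {Y : Type} [TopologicalSpace Y]
    (h : (Fin d → X) → Y) (hh) (hc : Continuous h) : Continuous (spLift h hh) :=
  spq_open.continuous_comp_iff.1 hc

/-- Entrywise map on symmetric products. -/
def spMap {X Y : Type} [TopologicalSpace X] [TopologicalSpace Y] {d : ℕ} (h : X → Y) :
    SP X d → SP Y d :=
  spLift (fun f => spq (h ∘ f)) (fun f σ => (spq_eq.2 ⟨σ, rfl⟩ : spq (h ∘ f) = spq (h ∘ f ∘ σ)).symm)

@[simp] theorem spMap_spq {X Y : Type} [TopologicalSpace X] [TopologicalSpace Y] {d : ℕ}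
    (h : X → Y) (f : Fin d → X) : spMap h (spq f) = spq (h ∘ f) := rfl

/-- Joint continuity of entrywise maps with a parameter, at a point. -/
theorem spMap_contAt {P X Y : Type} [TopologicalSpace P] [TopologicalSpace X]
    [TopologicalSpace Y] {d : ℕ} (h : P → X → Y) (p : P) (f : Fin d → X)
    (hc : ∀ i, ContinuousAt (fun a : P × X => h a.1 a.2) (p, f i)) :
    ContinuousAt (fun a : P × SP X d => spMap (h a.1) a.2) (p, spq f) := by
  have hq : IsOpenQuotientMap (Prod.map id spq : P × (Fin d → X) → P × SP X d) :=
    IsOpenQuotientMap.id.prodMap spq_open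
  refine (hq.continuousAt_comp_iff (x := (p, f))).1 ?_
  change ContinuousAt (fun a : P × (Fin d → X) => spq (fun i => h a.1 (a.2 i))) (p, f)
  refine spq_open.continuous.continuousAt.comp ?_
  refine continuousAt_pi.2 fun i => ?_
  refine ContinuousAt.comp (g := fun a : P × X => h a.1 a.2)
    (f := fun a : P × (Fin d → X) => (a.1, a.2 i)) (hc i) ?_
  exact (continuous_fst.prodMk ((continuous_apply i).comp continuous_snd)).continuousAt

/-- Product of averages over subsets of size `j+1`. -/
noncomputable def spE {X : Type} [TopologicalSpace X] (δ : X → ℝ) (d j : ℕ) : SP X d → ℝ :=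
  spLift (fun f => ∏ S ∈ (Finset.univ : Finset (Fin d)).powersetCard (j + 1),
      (∑ i ∈ S, δ (f i)) / (j + 1)) (by
    intro f σ
    refine Finset.prod_bij' (fun S _ => S.map σ.toEmbedding)
      (fun S _ => S.map σ.symm.toEmbedding) ?_ ?_ ?_ ?_ ?_
    · intro S hS; simpa using hS
    · intro S hS; simpa using hS
    · intro S hS; ext; simp
    · intro S hS; ext; simp
    · intro S hS; simp)

theorem spE_spq {X : Type} [TopologicalSpace X] (δ : X → ℝ) (d j : ℕ) (f : Fin d → X) :
    spE δ d j (spq f) = ∏ S ∈ (Finset.univ : Finset (Fin d)).powersetCard (j + 1),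
      (∑ i ∈ S, δ (f i)) / (j + 1) := rfl

theorem spE_cont {X : Type} [TopologicalSpace X] (δ : X → ℝ) (hδ : Continuous δ) (d j : ℕ) :
    Continuous (spE δ d j) := by
  refine spLift_cont _ _ ?_
  fun_prop

theorem spE_pos {X : Type} [TopologicalSpace X] (δ : X → ℝ) (h0 : ∀ x, 0 ≤ δ x) (d j : ℕ)
    (f : Fin d → X) (h : ∀ S : Finset (Fin d), S.card = j + 1 → ∃ i ∈ S, δ (f i) ≠ 0) :
    0 < spE δ d j (spq f) := by
  rw [spE_spq]
  refine Finset.prod_pos fun S hS => ?_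
  obtain ⟨i, hi, hne⟩ := h S (Finset.mem_powersetCard.1 hS).2
  have : 0 < ∑ i ∈ S, δ (f i) :=
    Finset.sum_pos' (fun i _ => h0 _) ⟨i, hi, lt_of_le_of_ne (h0 _) hne.symm⟩
  positivity

theorem spE_le {X : Type} [TopologicalSpace X] (δ : X → ℝ) (h0 : ∀ x, 0 ≤ δ x)
    (h1 : ∀ x, δ x ≤ 1) (d j : ℕ)
    (f : Fin d → X) (S : Finset (Fin d)) (hS : S.card = j + 1) :
    spE δ d j (spq f) ≤ (∑ i ∈ S, δ (f i)) / (j + 1) := by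
  rw [spE_spq]
  have hS' : S ∈ (Finset.univ : Finset (Fin d)).powersetCard (j + 1) := by simp [hS]
  have hnn : ∀ T : Finset (Fin d), 0 ≤ (∑ i ∈ T, δ (f i)) / ((j : ℝ) + 1) := fun T =>
    div_nonneg (Finset.sum_nonneg fun i _ => h0 _) (by positivity)
  rw [← Finset.mul_prod_erase _ _ hS']
  refine mul_le_of_le_one_right (hnn S) (Finset.prod_le_one (fun T _ => hnn T) ?_)
  intro T hT
  rw [div_le_one (by positivity)]
  calc ∑ i ∈ T, δ (f i) ≤ ∑ i ∈ T, 1 := Finset.sum_le_sum fun i _ => h1 _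
    _ = (j : ℝ) + 1 := by
      have := (Finset.mem_powersetCard.1 (Finset.mem_of_mem_erase hT)).2
      simp [this]

theorem spE_zero_pos {X : Type} [TopologicalSpace X] (δ : X → ℝ) (h0 : ∀ x, 0 ≤ δ x)
    (h1 : ∀ x, δ x ≤ 1) (d : ℕ) (f : Fin d → X) :
    0 < spE δ d 0 (spq f) ↔ ∀ i, δ (f i) ≠ 0 := by
  constructor
  · intro h i hi
    have := spE_le δ h0 h1 d 0 f {i} (by simp)
    simp [hi] at this
    linarith
  · intro h
    refine spE_pos δ h0 d 0 f fun S hS => ?_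
    obtain ⟨i, rfl⟩ := Finset.card_eq_one.1 (by simpa using hS)
    exact ⟨i, by simp, h i⟩

/-- Clamp function: `1` for `t ≤ a`, `0` for `t ≥ 2a`. -/
noncomputable def clamp (a t : ℝ) : ℝ := max 0 (min 1 (2 - t / a))

theorem clamp_cont (a : ℝ) : Continuous (clamp a) := by
  unfold clamp; fun_prop

theorem clamp_one {a t : ℝ} (ha : 0 < a) (h : t ≤ a) : clamp a t = 1 := by
  have : t / a ≤ 1 := (div_le_one ha).2 h
  unfold clamp
  rw [min_eq_left (by linarith), max_eq_right (by norm_num)]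

theorem clamp_zero {a t : ℝ} (ha : 0 < a) (h : 2 * a ≤ t) : clamp a t = 0 := by
  have : 2 ≤ t / a := (le_div_iff₀ ha).2 h
  unfold clamp
  rw [max_eq_left]
  exact (min_le_right _ _).trans (by linarith)

theorem clamp_nonneg (a t : ℝ) : 0 ≤ clamp a t := le_max_left _ _
theorem clamp_le_one (a t : ℝ) : clamp a t ≤ 1 := max_le (by norm_num) (min_le_left _ _)

/-- The domain `D` is thin for `V`: continuous maps to `V` can be perturbed off the origin. -/
def Thin (D V : Type) [TopologicalSpace D] [NormedAddCommGroup V] : Prop :=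
  ∀ c : D → V, Continuous c → ∀ ε > 0, ∃ u : D → V, Continuous u ∧ (∀ x, ‖u x‖ < ε) ∧
    ∀ x, c x + u x ≠ 0

theorem thin_of_embedding {D E : Type} [TopologicalSpace D] [CompactSpace D]
    [NormedAddCommGroup E] [NormedSpace ℝ E] [FiniteDimensional ℝ E] (N : ℕ)
    (ι : D → E) (hι : Continuous ι) (hinj : Injective ι)
    (hdim : Module.finrank ℝ E < 2 * N) : Thin D (Fin N → ℂ) := by
  intro c hc ε hε
  have he : Topology.IsClosedEmbedding ι := hι.isClosedEmbedding hinj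
  obtain ⟨G, hG⟩ := ContinuousMap.exists_extension' he ⟨c, hc⟩
  obtain ⟨h, hh, hd, -⟩ := G.continuous.exists_contDiff_approx 1
    (continuous_const (y := ε / 2)) (fun _ => by positivity)
  have hf : Module.finrank ℝ (Fin N → ℂ) = 2 * N := by
    rw [Module.finrank_pi_fintype]; simp [mul_comm]
  have hdense := ContDiff.dense_compl_range_of_finrank_lt_finrank hh (hf ▸ hdim)
  obtain ⟨e, he1, he2⟩ := hdense.exists_dist_lt 0 (half_pos hε)
  refine ⟨fun x => h (ι x) - c x - e, ?_, ?_, ?_⟩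
  · exact ((hh.continuous.comp hι).sub hc).sub continuous_const
  · intro x
    have h1 := hd (ι x)
    have h2 : G (ι x) = c x := congrFun hG x
    rw [h2, dist_eq_norm] at h1
    rw [dist_zero_left] at he2
    calc _ ≤ _ := norm_sub_le _ _
      _ < ε := by linarith
  · intro x hx
    apply he1
    refine ⟨ι x, ?_⟩
    have : h (ι x) - e = 0 := by rw [← hx]; simp only []; abel
    exact sub_eq_zero.1 this

/-- One step of the general position argument. -/
theorem step {X V D : Type} [TopologicalSpace X] [NormedAddCommGroup V] [NormedSpace ℝ V]
    [TopologicalSpace D] [CompactSpace D] (hthin : Thin D V)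
    (δ : X → ℝ) (hδ : Continuous δ) (h0 : ∀ x, 0 ≤ δ x) (h1 : ∀ x, δ x ≤ 1)
    (φ : X → V) (hφ : Continuous φ) (Θ : V → X → X)
    (hA : ∀ v p, δ (Θ v p) = 0 → δ p ≤ ‖v‖ ∧ (‖v‖ ≤ 1 → φ p = -v))
    (d j : ℕ) (B : Set D) (hB : IsClosed B) (g : D → SP X d) (hg : Continuous g)
    (hgj : ∀ x, 0 < spE δ d (j + 1) (g x)) (hgB : ∀ x ∈ B, 0 < spE δ d 0 (g x)) :
    ∃ v : D → V, Continuous v ∧ (∀ x ∈ B, v x = 0) ∧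
      ∀ x, 0 < spE δ d j (spMap (Θ (v x)) (g x)) := by
  obtain ⟨m, hm, hm'⟩ := isCompact_univ.exists_forall_le'
    ((spE_cont δ hδ d (j + 1)).comp hg).continuousOn (a := 0) (fun x _ => hgj x)
  obtain ⟨η, hη, hη'⟩ := hB.isCompact.exists_forall_le'
    ((spE_cont δ hδ d 0).comp hg).continuousOn (a := 0) hgB
  let C : SP X d → V := spLift (fun f => ∑ i, clamp (m / 2) (δ (f i)) • φ (f i)) (by
    intro f σ
    exact Equiv.sum_comp σ (fun i => clamp (m / 2) (δ (f i)) • φ (f i)))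
  have hC : Continuous C := by
    refine spLift_cont _ _ ?_
    refine continuous_finsetSum _ fun i _ => ?_
    exact ((clamp_cont _).comp (hδ.comp (continuous_apply i))).smul
      (hφ.comp (continuous_apply i))
  obtain ⟨u, hu, hus, hun⟩ := hthin (fun x => ((j : ℝ) + 1)⁻¹ • C (g x))
    ((hC.comp hg).const_smul _) (min 1 (min (m / 2) (η / 2))) (by positivity)
  have hbound : ∀ x, ‖clamp (η / 2) (spE δ d 0 (g x)) • u x‖ ≤ ‖u x‖ := by
    intro x
    rw [norm_smul, Real.norm_of_nonneg (clamp_nonneg _ _)]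
    exact mul_le_of_le_one_left (norm_nonneg _) (clamp_le_one _ _)
  refine ⟨fun x => clamp (η / 2) (spE δ d 0 (g x)) • u x, ?_, ?_, ?_⟩
  · exact ((clamp_cont _).comp ((spE_cont δ hδ d 0).comp hg)).smul hu
  · intro x hx
    have := hη' x hx
    simp only [Function.comp] at this ⊢
    rw [clamp_zero (by positivity) (by linarith), zero_smul]
  · intro x
    obtain ⟨f, hf⟩ := spq_surj (g x)
    have hux := hus x
    have hb := hbound x
    have hnx := hun x
    have hmx := hm' x (mem_univ x)
    simp only [Function.comp] at hmx
    simp only [lt_min_iff] at hux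
    obtain ⟨hu1, hu2, hu3⟩ := hux
    beta_reduce
    rw [← hf] at hb hnx hmx ⊢
    rw [spMap_spq]
    refine spE_pos δ h0 d j _ fun S hS => ?_
    by_contra! hbad
    simp only [Function.comp] at hbad
    set v := clamp (η / 2) (spE δ d 0 (spq f)) • u x with hv
    have hsmall : ∀ i ∈ S, δ (f i) ≤ ‖u x‖ := fun i hi => ((hA _ _ (hbad i hi)).1).trans hb
    have hval : ∀ i ∈ S, φ (f i) = -v := fun i hi => (hA _ _ (hbad i hi)).2 (by linarith)
    -- the cutoff equals one
    obtain ⟨i₀, hi₀⟩ : S.Nonempty := Finset.card_pos.1 (by omega)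
    have hvu : v = u x := by
      have := spE_le δ h0 h1 d 0 f {i₀} (by simp)
      simp at this
      have h2 := hsmall i₀ hi₀
      rw [hv, clamp_one (by positivity) (by linarith), one_smul]
    -- the other points are far away
    have hfar : ∀ i, i ∉ S → m ≤ δ (f i) := by
      intro i hi
      by_contra! hlt
      have h2 := spE_le δ h0 h1 d (j + 1) f (insert i S) (by
        rw [Finset.card_insert_of_notMem hi, hS])
      rw [Finset.sum_insert hi] at h2
      have h3 : ∑ i ∈ S, δ (f i) ≤ ∑ i ∈ S, m :=
        Finset.sum_le_sum fun i hi => (hsmall i hi).trans (by linarith)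
      rw [Finset.sum_const, hS, nsmul_eq_mul] at h3
      have h4 := hmx.trans h2
      rw [le_div_iff₀ (by positivity)] at h4
      push_cast at h3 h4
      nlinarith
    apply hnx
    have hCval : C (spq f) = -(((j : ℝ) + 1) • v) := by
      change ∑ i, clamp (m / 2) (δ (f i)) • φ (f i) = _
      rw [← Finset.sum_subset (Finset.subset_univ S)]
      · rw [Finset.sum_congr rfl (g := fun _ => -v)]
        · rw [Finset.sum_const, hS, ← Nat.cast_smul_eq_nsmul ℝ]
          push_cast
          rw [smul_neg]
        · intro i hi
          rw [clamp_one (by positivity) (by linarith [hsmall i hi]), one_smul, hval i hi]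
      · intro i _ hi
        rw [clamp_zero (by positivity) (by linarith [hfar i hi]), zero_smul]
    rw [hCval, smul_neg, smul_smul, inv_mul_cancel₀ (by positivity), one_smul, hvu]
    simp

/-- General position: moving a map off the bad locus by a homotopy through translations. -/
theorem general_position {X V D : Type} [TopologicalSpace X] [NormedAddCommGroup V]
    [NormedSpace ℝ V]
    [TopologicalSpace D] [CompactSpace D] (hthin : Thin D V)
    (δ : X → ℝ) (hδ : Continuous δ) (h0 : ∀ x, 0 ≤ δ x) (h1 : ∀ x, δ x ≤ 1)
    (φ : X → V) (hφ : Continuous φ) (Θ : V → X → X)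
    (hΘ : Continuous (fun a : V × X => Θ a.1 a.2)) (hΘ0 : ∀ p, Θ 0 p = p)
    (hΘa : ∀ v w p, Θ v (Θ w p) = Θ (v + w) p)
    (hA : ∀ v p, δ (Θ v p) = 0 → δ p ≤ ‖v‖ ∧ (‖v‖ ≤ 1 → φ p = -v))
    (d : ℕ) (B : Set D) (hB : IsClosed B) (g : D → SP X d) (hg : Continuous g)
    (hgB : ∀ x ∈ B, 0 < spE δ d 0 (g x)) :
    ∃ v : D → V, Continuous v ∧ (∀ x ∈ B, v x = 0) ∧
      ∀ x, 0 < spE δ d 0 (spMap (Θ (v x)) (g x)) := by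
  have hΘ0' : ∀ s : SP X d, spMap (Θ 0) s = s := by
    intro s
    obtain ⟨f, rfl⟩ := spq_surj s
    rw [spMap_spq]
    congr 1
    funext i
    exact hΘ0 _
  have hΘa' : ∀ v w (s : SP X d), spMap (Θ v) (spMap (Θ w) s) = spMap (Θ (v + w)) s := by
    intro v w s
    obtain ⟨f, rfl⟩ := spq_surj s
    simp only [spMap_spq]
    congr 1
    funext i
    exact hΘa _ _ _
  have key : ∀ l : ℕ, l ≤ d → ∃ v : D → V, Continuous v ∧ (∀ x ∈ B, v x = 0) ∧
      ∀ x, 0 < spE δ d (d - l) (spMap (Θ (v x)) (g x)) := by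
    intro l
    induction l with
    | zero =>
      intro _
      refine ⟨fun _ => 0, continuous_const, fun _ _ => rfl, fun x => ?_⟩
      rw [hΘ0']
      obtain ⟨f, hf⟩ := spq_surj (g x)
      rw [← hf]
      refine spE_pos δ h0 d _ f fun S hS => ?_
      have := S.card_le_univ
      simp at this
      omega
    | succ l ih =>
      intro hl
      obtain ⟨v, hv, hvB, hvp⟩ := ih (by omega)
      have hg' : Continuous (fun x => spMap (Θ (v x)) (g x)) := by
        rw [continuous_iff_continuousAt]
        intro x
        obtain ⟨f, hf⟩ := spq_surj (g x)
        have := spMap_contAt Θ (v x) f (fun i => hΘ.continuousAt)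
        rw [hf] at this
        exact ContinuousAt.comp (f := fun x => (v x, g x)) this (hv.prodMk hg).continuousAt
      have e : d - l = (d - (l + 1)) + 1 := by omega
      rw [e] at hvp
      obtain ⟨w, hw, hwB, hwp⟩ := step hthin δ hδ h0 h1 φ hφ Θ hA d (d - (l + 1)) B hB
        _ hg' hvp (fun x hx => by rw [hvB x hx, hΘ0']; exact hgB x hx)
      refine ⟨fun x => w x + v x, hw.add hv, fun x hx => by simp only [hwB x hx, hvB x hx, add_zero],
        fun x => ?_⟩
      have := hwp x
      rwa [hΘa'] at this
  simpa using key d le_rfl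

theorem homotopicRel_of {D Z : Type} [TopologicalSpace D] [TopologicalSpace Z] (f₀ f₁ : C(D, Z))
    (S : Set D) (H : unitInterval × D → Z) (hH : Continuous H) (hz : ∀ y, H (0, y) = f₀ y)
    (ho : ∀ y, H (1, y) = f₁ y) (hS : ∀ t, ∀ y ∈ S, H (t, y) = f₀ y) :
    f₀.HomotopicRel f₁ S :=
  ⟨{ toFun := H
     continuous_toFun := hH
     map_zero_left := hz
     map_one_left := ho
     prop' := hS }⟩

theorem boundary_closed (k : ℕ) : IsClosed (Cube.boundary (Fin k)) := by
  have : Cube.boundary (Fin k) =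
      ⋃ i, ({y : Fin k → unitInterval | y i = 0} ∪ {y | y i = 1}) := by
    ext y; simp [Cube.boundary]
  rw [this]
  refine isClosed_iUnion_of_finite fun i => ?_
  exact (isClosed_eq (continuous_apply i) continuous_const).union
    (isClosed_eq (continuous_apply i) continuous_const)

/-- The abstract form of the main theorem. -/
theorem main_abs {X Y V : Type} [TopologicalSpace X] [TopologicalSpace Y]
    [NormedAddCommGroup V] [NormedSpace ℝ V] (k : ℕ)
    (hthin : Thin (Fin k → unitInterval) V)
    (hthin' : Thin (unitInterval × (Fin k → unitInterval)) V)
    (δ : X → ℝ) (hδ : Continuous δ) (h0 : ∀ x, 0 ≤ δ x) (h1 : ∀ x, δ x ≤ 1)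
    (φ : X → V) (hφ : Continuous φ) (Θ : V → X → X)
    (hΘ : Continuous (fun a : V × X => Θ a.1 a.2)) (hΘ0 : ∀ p, Θ 0 p = p)
    (hΘa : ∀ v w p, Θ v (Θ w p) = Θ (v + w) p)
    (hA : ∀ v p, δ (Θ v p) = 0 → δ p ≤ ‖v‖ ∧ (‖v‖ ≤ 1 → φ p = -v))
    (incl : Y → X) (hincl : ∀ y, δ (incl y) ≠ 0)
    (π : X → Y) (hπ : ∀ p, δ p ≠ 0 → ContinuousAt π p) (hπi : ∀ y, π (incl y) = y)
    (R : unitInterval → X → X)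
    (hR : ∀ t p, δ p ≠ 0 → ContinuousAt (fun a : unitInterval × X => R a.1 a.2) (t, p))
    (hR0 : ∀ p, δ p ≠ 0 → R 0 p = incl (π p)) (hR1 : ∀ p, R 1 p = p)
    (hRi : ∀ t y, R t (incl y) = incl y)
    (d : ℕ) (F : C(SP Y d, SP X d)) (hF : ∀ f : Fin d → Y, F (spq f) = spq (incl ∘ f))
    (x : SP Y d) :
    Function.Bijective (HomotopyGroup.inducedMap (Fin k) F x) := by
  have hFgood : ∀ s, 0 < spE δ d 0 (F s) := by
    intro s
    obtain ⟨f, rfl⟩ := spq_surj s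
    rw [hF, spE_zero_pos δ h0 h1]
    exact fun i => hincl _
  have hΘ0' : ∀ s : SP X d, spMap (Θ 0) s = s := by
    intro s
    obtain ⟨f, rfl⟩ := spq_surj s
    rw [spMap_spq]
    congr 1
    funext i
    exact hΘ0 _
  have hR1' : ∀ s : SP X d, spMap (R 1) s = s := by
    intro s
    obtain ⟨f, rfl⟩ := spq_surj s
    rw [spMap_spq]
    congr 1
    funext i
    exact hR1 _
  have hRi' : ∀ t (s : SP Y d), spMap (R t) (F s) = F s := by
    intro t s
    obtain ⟨f, rfl⟩ := spq_surj s
    rw [hF, spMap_spq]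
    congr 1
    funext i
    exact hRi _ _
  have hπi' : ∀ s : SP Y d, spMap π (F s) = s := by
    intro s
    obtain ⟨f, rfl⟩ := spq_surj s
    rw [hF, spMap_spq]
    congr 1
    funext i
    exact hπi _
  have hR0' : ∀ s : SP X d, 0 < spE δ d 0 s → spMap (R 0) s = F (spMap π s) := by
    intro s hs
    obtain ⟨f, rfl⟩ := spq_surj s
    rw [spE_zero_pos δ h0 h1] at hs
    rw [spMap_spq, spMap_spq, hF]
    congr 1
    funext i
    exact hR0 _ (hs i)
  have cΘ : Continuous (fun a : V × SP X d => spMap (Θ a.1) a.2) := by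
    rw [continuous_iff_continuousAt]
    rintro ⟨v, s⟩
    obtain ⟨f, rfl⟩ := spq_surj s
    exact spMap_contAt Θ v f (fun i => hΘ.continuousAt)
  have cR : ∀ t (s : SP X d), 0 < spE δ d 0 s →
      ContinuousAt (fun a : unitInterval × SP X d => spMap (R a.1) a.2) (t, s) := by
    intro t s hs
    obtain ⟨f, rfl⟩ := spq_surj s
    rw [spE_zero_pos δ h0 h1] at hs
    exact spMap_contAt R t f (fun i => hR t _ (hs i))
  have cπ : ∀ (s : SP X d), 0 < spE δ d 0 s → ContinuousAt (spMap π : SP X d → SP Y d) s := by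
    intro s hs
    obtain ⟨f, rfl⟩ := spq_surj s
    rw [spE_zero_pos δ h0 h1] at hs
    have := spMap_contAt (fun _ : Unit => π) () f (fun i =>
      ContinuousAt.comp (f := Prod.snd) (hπ _ (hs i)) continuousAt_snd)
    exact ContinuousAt.comp (f := fun s : SP X d => ((), s)) this
      (continuous_const.prodMk continuous_id).continuousAt
  constructor
  · intro a b
    induction a using Quotient.inductionOn with | _ α => ?_
    induction b using Quotient.inductionOn with | _ β => ?_
    intro hab
    obtain ⟨H⟩ := Quotient.exact hab
    have H0 : ∀ y, H (0, y) = F (α y) := fun y => H.apply_zero y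
    have H1 : ∀ y, H (1, y) = F (β y) := fun y => H.apply_one y
    have HB : ∀ t, ∀ y ∈ Cube.boundary (Fin k), H (t, y) = F (α y) := fun t y hy =>
      H.eq_fst t hy
    obtain ⟨v, hv, hvB, hvg⟩ := general_position hthin' δ hδ h0 h1 φ hφ Θ hΘ hΘ0 hΘa hA d
      {a : unitInterval × (Fin k → unitInterval) | a.1 = 0 ∨ a.1 = 1 ∨ a.2 ∈ Cube.boundary (Fin k)}
      ((isClosed_eq continuous_fst continuous_const).union
        ((isClosed_eq continuous_fst continuous_const).union
          ((boundary_closed k).preimage continuous_snd)))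
      (fun a => H a) (map_continuous H) (by
        rintro ⟨t, y⟩ (h | h | h)
        · simp only at h
          subst h
          rw [H0]; exact hFgood _
        · simp only at h
          subst h
          rw [H1]; exact hFgood _
        · rw [HB t y h]; exact hFgood _)
    refine Quotient.sound ?_
    refine homotopicRel_of _ _ _ (fun a => spMap π (spMap (Θ (v a)) (H a))) ?_ ?_ ?_ ?_
    · rw [continuous_iff_continuousAt]
      intro a
      refine ContinuousAt.comp (f := fun a => spMap (Θ (v a)) (H a)) (cπ _ (hvg a)) ?_
      exact (cΘ.comp (hv.prodMk (map_continuous H))).continuousAt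
    · intro y
      beta_reduce
      rw [hvB _ (Or.inl rfl), hΘ0', H0, hπi']; rfl
    · intro y
      beta_reduce
      rw [hvB _ (Or.inr (Or.inl rfl)), hΘ0', H1, hπi']; rfl
    · intro t y hy
      beta_reduce
      rw [hvB _ (Or.inr (Or.inr hy)), hΘ0', HB t y hy, hπi']; rfl
  · intro a
    induction a using Quotient.inductionOn with | _ α => ?_
    have αB : ∀ y ∈ Cube.boundary (Fin k), α y = F x := α.2
    have cα : Continuous (fun y => α y) := α.1.continuous
    obtain ⟨v, hv, hvB, hvg⟩ := general_position hthin δ hδ h0 h1 φ hφ Θ hΘ hΘ0 hΘa hA d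
      (Cube.boundary (Fin k)) (boundary_closed k) (fun y => α y) cα
      (fun y hy => by rw [αB y hy]; exact hFgood _)
    have cα' : Continuous (fun y => spMap (Θ (v y)) (α y)) := cΘ.comp (hv.prodMk cα)
    have α'B : ∀ y ∈ Cube.boundary (Fin k), spMap (Θ (v y)) (α y) = F x := by
      intro y hy
      rw [hvB y hy, hΘ0', αB y hy]
    let α' : C(Fin k → unitInterval, SP X d) := ⟨fun y => spMap (Θ (v y)) (α y), cα'⟩
    let β : GenLoop (Fin k) (SP Y d) x :=
      ⟨⟨fun y => spMap π (spMap (Θ (v y)) (α y)), by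
        rw [continuous_iff_continuousAt]
        intro y
        exact ContinuousAt.comp (f := fun a => spMap (Θ (v a)) (α a)) (cπ _ (hvg y))
          cα'.continuousAt⟩, by
        intro y hy
        change spMap π (spMap (Θ (v y)) (α y)) = x
        rw [α'B y hy, hπi']⟩
    refine ⟨Quotient.mk _ β, ?_⟩
    refine Quotient.sound ?_
    have s1 : (F.comp β.1).HomotopicRel α' (Cube.boundary (Fin k)) := by
      refine homotopicRel_of _ _ _ (fun a => spMap (R a.1) (spMap (Θ (v a.2)) (α a.2))) ?_ ?_ ?_ ?_
      · rw [continuous_iff_continuousAt]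
        rintro ⟨t, y⟩
        refine ContinuousAt.comp
          (f := fun a : unitInterval × (Fin k → unitInterval) =>
            (a.1, spMap (Θ (v a.2)) (α a.2)))
          (g := fun a : unitInterval × SP X d => spMap (R a.1) a.2) (cR t _ (hvg y)) ?_
        exact (continuous_fst.prodMk (cα'.comp continuous_snd)).continuousAt
      · intro y
        exact hR0' _ (hvg y)
      · intro y
        exact hR1' _
      · intro t y hy
        change spMap (R t) (spMap (Θ (v y)) (α y)) = F (spMap π (spMap (Θ (v y)) (α y)))
        rw [α'B y hy, hRi', hπi']
    have s2 : α.1.HomotopicRel α' (Cube.boundary (Fin k)) := by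
      refine homotopicRel_of _ _ _ (fun a => spMap (Θ ((a.1 : ℝ) • v a.2)) (α a.2)) ?_ ?_ ?_ ?_
      · exact cΘ.comp (((continuous_subtype_val.comp continuous_fst).smul
          (hv.comp continuous_snd)).prodMk (cα.comp continuous_snd))
      · intro y
        simp only [Set.Icc.coe_zero, zero_smul]
        exact hΘ0' _
      · intro y
        simp only [Set.Icc.coe_one, one_smul]
        rfl
      · intro t y hy
        simp only [hvB y hy, smul_zero]
        exact hΘ0' _
    exact s1.trans s2.symm

/-! ### Concrete coordinates on projective space -/

/-- Quotient projection to projective space. -/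
noncomputable def cpq {n : ℕ} (v : {v : Fin (n + 1) → ℂ // v ≠ 0}) : CP n :=
  Quotient.mk (projectivizationSetoid ℂ (Fin (n + 1) → ℂ)) v

theorem cpq_eq {n : ℕ} {v w : {v : Fin (n + 1) → ℂ // v ≠ 0}} :
    cpq v = cpq w ↔ ∃ a : ℂˣ, a • (w : Fin (n + 1) → ℂ) = v :=
  Quotient.eq (r := projectivizationSetoid ℂ (Fin (n + 1) → ℂ))

theorem cpq_surj {n : ℕ} (p : CP n) : ∃ v, cpq v = p := Quotient.exists_rep p

theorem cpq_open {n : ℕ} :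
    IsOpenQuotientMap (cpq : {v : Fin (n + 1) → ℂ // v ≠ 0} → CP n) where
  surjective := cpq_surj
  continuous := continuous_quot_mk
  isOpenMap U hU := by
    change IsOpen ((cpq : _ → CP n) ⁻¹' (cpq '' U))
    have hne : ∀ (a : ℂˣ) (v : {v : Fin (n + 1) → ℂ // v ≠ 0}),
        a • (v : Fin (n + 1) → ℂ) ≠ 0 := fun a v => by
      rw [Ne, smul_eq_zero_iff_eq]; exact v.2
    have : ((cpq : _ → CP n) ⁻¹' (cpq '' U)) =
        ⋃ a : ℂˣ, (fun v : {v : Fin (n + 1) → ℂ // v ≠ 0} =>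
          (⟨a • (v : Fin (n + 1) → ℂ), hne a v⟩ : {v : Fin (n + 1) → ℂ // v ≠ 0})) ⁻¹' U := by
      ext f
      simp only [mem_preimage, mem_image, mem_iUnion]
      constructor
      · rintro ⟨g, hg, h⟩
        obtain ⟨a, ha⟩ := cpq_eq.1 h
        refine ⟨a, ?_⟩
        convert hg
      · rintro ⟨a, h⟩
        exact ⟨_, h, cpq_eq.2 ⟨a, rfl⟩⟩
    rw [this]
    refine isOpen_iUnion fun a => hU.preimage ?_
    exact (continuous_subtype_val.const_smul a).subtype_mk _

/-- Total version of the projection. -/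
noncomputable def cpT {n : ℕ} (v : Fin (n + 1) → ℂ) : CP n :=
  open Classical in
  if h : v ≠ 0 then cpq ⟨v, h⟩ else cpq ⟨fun _ => 1, fun h => one_ne_zero (congrFun h 0)⟩

theorem cpT_of {n : ℕ} (v : Fin (n + 1) → ℂ) (h : v ≠ 0) : cpT v = cpq ⟨v, h⟩ := by
  simp [cpT, h]

theorem cpT_surj {n : ℕ} (p : CP n) : ∃ v, v ≠ 0 ∧ cpT v = p := by
  obtain ⟨⟨v, hv⟩, rfl⟩ := cpq_surj p
  exact ⟨v, hv, cpT_of v hv⟩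

theorem cpT_smul {n : ℕ} (a : ℂˣ) (v : Fin (n + 1) → ℂ) : cpT (a • v) = cpT v := by
  by_cases hv : v = 0
  · simp [hv]
  · have : a • v ≠ 0 := by rw [Ne, smul_eq_zero_iff_eq]; exact hv
    rw [cpT_of _ hv, cpT_of _ this]
    exact cpq_eq.2 ⟨a, rfl⟩

theorem cpT_contAt {n : ℕ} (v : Fin (n + 1) → ℂ) (h : v ≠ 0) : ContinuousAt (cpT (n := n)) v := by
  have ho : Topology.IsOpenEmbedding
      (Subtype.val : {v : Fin (n + 1) → ℂ // v ≠ 0} → Fin (n + 1) → ℂ) :=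
    IsOpen.isOpenEmbedding_subtypeVal isOpen_ne
  refine (ho.continuousAt_iff (x := ⟨v, h⟩)).1 ?_
  have : (cpT (n := n)) ∘ (Subtype.val : {v : Fin (n + 1) → ℂ // v ≠ 0} → _) = cpq := by
    funext w
    exact cpT_of _ w.2
  rw [this]
  exact cpq_open.continuous.continuousAt

/-- Lift a homogeneous function. -/
noncomputable def cpLift {n : ℕ} {Y : Type} (h : (Fin (n + 1) → ℂ) → Y)
    (hh : ∀ (a : ℂˣ) v, h (a • v) = h v) (p : CP n) : Y :=
  Quotient.lift (s := projectivizationSetoid ℂ (Fin (n + 1) → ℂ)) (fun v => h v.1) (by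
    intro v w hvw
    obtain ⟨a, ha⟩ := hvw
    simp only at ha
    rw [← ha]
    exact hh a _) p

theorem cpLift_cpT {n : ℕ} {Y : Type} (h : (Fin (n + 1) → ℂ) → Y) (hh)
    (v : Fin (n + 1) → ℂ) (hv : v ≠ 0) : cpLift h hh (cpT v) = h v := by
  rw [cpT_of v hv]; rfl

theorem cpLift_cont {n : ℕ} {Y : Type} [TopologicalSpace Y] (h : (Fin (n + 1) → ℂ) → Y) (hh)
    (hc : ∀ v, v ≠ 0 → ContinuousAt h v) : Continuous (cpLift h hh) := by
  refine cpq_open.continuous_comp_iff.1 ?_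
  rw [continuous_iff_continuousAt]
  intro v
  exact ContinuousAt.comp (f := Subtype.val) (hc v.1 v.2) continuousAt_subtype_val

/-- Map induced by a homogeneous map. -/
noncomputable def cpMap {n m : ℕ} (h : (Fin (n + 1) → ℂ) → (Fin (m + 1) → ℂ))
    (hh : ∀ (a : ℂˣ) v, h (a • v) = a • h v) : CP n → CP m :=
  cpLift (fun v => cpT (h v)) (fun a v => by rw [hh, cpT_smul])

theorem cpMap_cpT {n m : ℕ} (h : (Fin (n + 1) → ℂ) → (Fin (m + 1) → ℂ)) (hh)
    (v : Fin (n + 1) → ℂ) (hv : v ≠ 0) : cpMap h hh (cpT v) = cpT (h v) :=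
  cpLift_cpT _ _ v hv

theorem cpMap_contAt {P : Type} [TopologicalSpace P] {n m : ℕ}
    (h : P → (Fin (n + 1) → ℂ) → (Fin (m + 1) → ℂ))
    (hh : ∀ p (a : ℂˣ) v, h p (a • v) = a • h p v)
    (hc : Continuous (fun a : P × (Fin (n + 1) → ℂ) => h a.1 a.2)) (p : P)
    (v : Fin (n + 1) → ℂ) (hv : v ≠ 0) (hhv : h p v ≠ 0) :
    ContinuousAt (fun a : P × CP n => cpMap (h a.1) (hh a.1) a.2) (p, cpT v) := by
  have hq : IsOpenQuotientMap (Prod.map id cpq : P × {v : Fin (n + 1) → ℂ // v ≠ 0} → P × CP n) :=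
    IsOpenQuotientMap.id.prodMap cpq_open
  rw [cpT_of v hv]
  refine (hq.continuousAt_comp_iff (x := (p, ⟨v, hv⟩))).1 ?_
  change ContinuousAt (fun a : P × {v : Fin (n + 1) → ℂ // v ≠ 0} => cpT (h a.1 a.2.1)) _
  refine ContinuousAt.comp (f := fun a : P × {v : Fin (n + 1) → ℂ // v ≠ 0} => h a.1 a.2.1)
    (cpT_contAt _ hhv) ?_
  exact (hc.comp (continuous_fst.prodMk
    (continuous_subtype_val.comp continuous_snd))).continuousAt

/-- First coordinates. -/
def zc {n : ℕ} (v : Fin (n + 2) → ℂ) : Fin (n + 1) → ℂ := fun i => v i.castSucc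
/-- Last coordinate. -/
def wc {n : ℕ} (v : Fin (n + 2) → ℂ) : ℂ := v (Fin.last (n + 1))
/-- Assemble. -/
def mkv {n : ℕ} (z : Fin (n + 1) → ℂ) (w : ℂ) : Fin (n + 2) → ℂ :=
  Fin.snoc (α := fun _ => ℂ) z w

theorem zc_cont {n : ℕ} : Continuous (zc (n := n)) := by unfold zc; fun_prop
theorem wc_cont {n : ℕ} : Continuous (wc (n := n)) := by unfold wc; fun_prop
theorem mkv_cont {n : ℕ} {P : Type} [TopologicalSpace P] {f : P → Fin (n + 1) → ℂ} {g : P → ℂ}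
    (hf : Continuous f) (hg : Continuous g) : Continuous (fun p => mkv (f p) (g p)) :=
  Continuous.finSnoc hf hg
@[simp] theorem zc_mkv {n : ℕ} (z : Fin (n + 1) → ℂ) (w : ℂ) : zc (mkv z w) = z := by
  funext i; simp [zc, mkv]
@[simp] theorem wc_mkv {n : ℕ} (z : Fin (n + 1) → ℂ) (w : ℂ) : wc (mkv z w) = w := by
  simp [wc, mkv]
@[simp] theorem mkv_eta {n : ℕ} (v : Fin (n + 2) → ℂ) : mkv (zc v) (wc v) = v := by
  funext i
  refine Fin.lastCases ?_ (fun i => ?_) i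
  · simp [wc, mkv]
  · simp [zc, mkv]
@[simp] theorem zc_smul {n : ℕ} (a : ℂˣ) (v : Fin (n + 2) → ℂ) : zc (a • v) = (a : ℂ) • zc v := rfl
@[simp] theorem wc_smul {n : ℕ} (a : ℂˣ) (v : Fin (n + 2) → ℂ) : wc (a • v) = (a : ℂ) * wc v := rfl
@[simp] theorem zc_zero {n : ℕ} : zc (0 : Fin (n + 2) → ℂ) = 0 := rfl
@[simp] theorem wc_zero {n : ℕ} : wc (0 : Fin (n + 2) → ℂ) = 0 := rfl
theorem zc_hom {n : ℕ} (a : ℂˣ) (v : Fin (n + 2) → ℂ) : zc (a • v) = a • zc v := by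
  rw [zc_smul, Units.smul_def]
theorem vext {n : ℕ} {v w : Fin (n + 2) → ℂ} (h1 : zc v = zc w) (h2 : wc v = wc w) : v = w := by
  rw [← mkv_eta v, ← mkv_eta w, h1, h2]
theorem zw_ne {n : ℕ} {v : Fin (n + 2) → ℂ} (hv : v ≠ 0) : zc v ≠ 0 ∨ wc v ≠ 0 := by
  by_contra! h
  exact hv (vext h.1 h.2)
theorem max_pos' {n : ℕ} {v : Fin (n + 2) → ℂ} (hv : v ≠ 0) : 0 < max ‖zc v‖ ‖wc v‖ := by
  rcases zw_ne hv with h | h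
  · exact lt_max_of_lt_left (norm_pos_iff.2 h)
  · exact lt_max_of_lt_right (norm_pos_iff.2 h)

/-- Truncated distance to the last point. -/
noncomputable def dlt (n : ℕ) : CP (n + 1) → ℝ :=
  cpLift (fun v => ‖zc v‖ / max ‖zc v‖ ‖wc v‖) (by
    intro a v
    have : (0 : ℝ) < ‖(a : ℂ)‖ := norm_pos_iff.2 a.ne_zero
    simp only [zc_smul, wc_smul, norm_smul, norm_mul]
    rw [← mul_max_of_nonneg _ _ this.le, mul_div_mul_left _ _ this.ne'])

/-- Truncated affine coordinate near the last point. -/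
noncomputable def phi (n : ℕ) : CP (n + 1) → (Fin (n + 1) → ℂ) :=
  cpLift (fun v => (star (wc v) / ((max ‖zc v‖ ‖wc v‖ ^ 2 : ℝ) : ℂ)) • zc v) (by
    intro a v
    have h : (0 : ℝ) < ‖(a : ℂ)‖ := norm_pos_iff.2 a.ne_zero
    simp only [zc_smul, wc_smul, norm_smul, norm_mul]
    rw [← mul_max_of_nonneg _ _ h.le, smul_smul]
    congr 1
    have h2 : ((‖(a : ℂ)‖ : ℝ) : ℂ) ^ 2 = star (a : ℂ) * a := by
      have := Complex.conj_mul' (a : ℂ)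
      exact this.symm
    have h3 : star (a : ℂ) ≠ 0 := star_ne_zero.2 a.ne_zero
    have h4 := a.ne_zero
    push_cast
    rw [mul_pow, h2, star_mul']
    field_simp)

/-- Translations. -/
noncomputable def tht (n : ℕ) (u : Fin (n + 1) → ℂ) : CP (n + 1) → CP (n + 1) :=
  cpMap (fun v => mkv (zc v + wc v • u) (wc v)) (by
    intro a v
    apply vext <;> simp [smul_smul])

/-- Scaling the last coordinate. -/
noncomputable def rscale (n : ℕ) (t : unitInterval) : CP (n + 1) → CP (n + 1) :=
  cpMap (fun v => mkv (zc v) (((t : ℝ) : ℂ) * wc v)) (by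
    intro a v
    apply vext
    · simp
    · simp; ring)

/-- Projection from the last point. -/
noncomputable def prj (n : ℕ) : CP (n + 1) → CP n :=
  cpMap zc zc_hom

theorem dlt_ne {n : ℕ} {v : Fin (n + 2) → ℂ} (hv : v ≠ 0) : dlt n (cpT v) ≠ 0 ↔ zc v ≠ 0 := by
  rw [dlt, cpLift_cpT _ _ v hv, Ne, div_eq_zero_iff, norm_eq_zero]
  simp [(max_pos' hv).ne']

theorem trans_ne {n : ℕ} (u : Fin (n + 1) → ℂ) {v : Fin (n + 2) → ℂ} (hv : v ≠ 0) :
    mkv (zc v + wc v • u) (wc v) ≠ 0 := by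
  intro h
  have h1 : wc v = 0 := by simpa using congrArg wc h
  have h2 : zc v + wc v • u = 0 := by simpa using congrArg zc h
  rw [h1, zero_smul, add_zero] at h2
  exact hv (vext h2 h1)

theorem tht_cpT {n : ℕ} (u : Fin (n + 1) → ℂ) {v : Fin (n + 2) → ℂ} (hv : v ≠ 0) :
    tht n u (cpT v) = cpT (mkv (zc v + wc v • u) (wc v)) := cpMap_cpT _ _ v hv

theorem key_A (n : ℕ) (u : Fin (n + 1) → ℂ) (p : CP (n + 1)) (h : dlt n (tht n u p) = 0) :
    dlt n p ≤ ‖u‖ ∧ (‖u‖ ≤ 1 → phi n p = -u) := by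
  obtain ⟨v, hv, rfl⟩ := cpT_surj p
  rw [tht_cpT u hv] at h
  have hz : zc v + wc v • u = 0 := by
    by_contra hne
    exact (dlt_ne (trans_ne u hv)).2 (by simpa using hne) h
  have hz' : zc v = -(wc v • u) := eq_neg_of_add_eq_zero_left hz
  have hw : wc v ≠ 0 := by
    intro h0
    rw [h0, zero_smul, neg_zero] at hz'
    exact hv (vext hz' h0)
  have hn : ‖zc v‖ = ‖wc v‖ * ‖u‖ := by rw [hz', norm_neg, norm_smul]
  have hwp : 0 < ‖wc v‖ := norm_pos_iff.2 hw
  constructor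
  · rw [dlt, cpLift_cpT _ _ v hv, div_le_iff₀ (max_pos' hv)]
    calc ‖zc v‖ = ‖u‖ * ‖wc v‖ := by rw [hn, mul_comm]
      _ ≤ _ := by gcongr; exact le_max_right _ _
  · intro hu
    have : max ‖zc v‖ ‖wc v‖ = ‖wc v‖ := by
      apply max_eq_right
      rw [hn]
      exact mul_le_of_le_one_right hwp.le hu
    rw [phi, cpLift_cpT _ _ v hv, this, hz', smul_neg, smul_smul]
    have h2 : ((‖wc v‖ ^ 2 : ℝ) : ℂ) = star (wc v) * wc v := by
      push_cast
      exact (Complex.conj_mul' (wc v)).symm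
    have h3 : star (wc v) ≠ 0 := star_ne_zero.2 hw
    rw [h2]
    have : star (wc v) / (star (wc v) * wc v) * wc v = 1 := by field_simp
    rw [this, one_smul]

theorem dlt_cont (n : ℕ) : Continuous (dlt n) := by
  refine cpLift_cont _ _ fun v hv => ?_
  exact (zc_cont.norm.continuousAt).div (zc_cont.norm.max wc_cont.norm).continuousAt
    (max_pos' hv).ne'

theorem phi_cont (n : ℕ) : Continuous (phi n) := by
  refine cpLift_cont _ _ fun v hv => ?_
  have h1 : Continuous (fun v : Fin (n + 2) → ℂ => max ‖zc v‖ ‖wc v‖ ^ 2) :=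
    (zc_cont.norm.max wc_cont.norm).pow 2
  have h2 : Continuous (fun v : Fin (n + 2) → ℂ => ((max ‖zc v‖ ‖wc v‖ ^ 2 : ℝ) : ℂ)) :=
    Complex.continuous_ofReal.comp h1
  have h3 : Continuous (fun v : Fin (n + 2) → ℂ => star (wc v)) :=
    continuous_star.comp wc_cont
  have h4 : ((max ‖zc v‖ ‖wc v‖ ^ 2 : ℝ) : ℂ) ≠ 0 := by
    exact_mod_cast (pow_pos (max_pos' hv) 2).ne'
  have h5 : ContinuousAt
      (fun v : Fin (n + 2) → ℂ => star (wc v) / ((max ‖zc v‖ ‖wc v‖ ^ 2 : ℝ) : ℂ)) v :=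
    h3.continuousAt.div h2.continuousAt h4
  exact h5.smul zc_cont.continuousAt

end Aux

/-- **Proposition 3.5** (case `p = 0`): embedding `ℂP^n ⊆ ℂP^{n+1}` as the hyperplane
`{x_{n+1} = 0}` (i.e. `[x₀ : ⋯ : xₙ] ↦ [x₀ : ⋯ : xₙ : 0]`), the induced inclusion
`SP^d(ℂP^n) ↪ SP^d(ℂP^{n+1})` induces isomorphisms on homotopy groups `π_k` for all
`0 ≤ k ≤ 2n`. Here `incl` is the hyperplane embedding and `F` is the continuous map it
induces entrywise on symmetric products. -/
theorem inclusion_sp_cp_pi_iso (n d : ℕ) (hd : 1 ≤ d)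
    (incl : CP n → CP (n + 1))
    (hincl : ∀ (v : Fin (n + 1) → ℂ) (hv : v ≠ 0)
      (h' : (Fin.snoc v (0 : ℂ) : Fin (n + 2) → ℂ) ≠ 0),
      incl (Projectivization.mk ℂ v hv) = Projectivization.mk ℂ (Fin.snoc v (0 : ℂ)) h')
    (F : C(SP (CP n) d, SP (CP (n + 1)) d))
    (hF : ∀ f : Fin d → CP n,
      F (Quotient.mk (SPSetoid (CP n) d) f) = Quotient.mk (SPSetoid (CP (n + 1)) d) (incl ∘ f)) :
    ∀ k : ℕ, k ≤ 2 * n → ∀ x : SP (CP n) d,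
      Function.Bijective (HomotopyGroup.inducedMap (Fin k) F x) := by
  intro k hk x
  have hI : ∀ v : Fin (n + 1) → ℂ, v ≠ 0 → incl (cpT v) = cpT (mkv v 0) := by
    intro v hv
    have h' : mkv v 0 ≠ 0 := fun h => hv (by simpa using congrArg zc h)
    rw [cpT_of v hv, cpT_of _ h']
    exact hincl v hv h'
  have hne : ∀ v : Fin (n + 1) → ℂ, v ≠ 0 → mkv v 0 ≠ 0 :=
    fun v hv h => hv (by simpa using congrArg zc h)
  refine main_abs (V := Fin (n + 1) → ℂ) k ?_ ?_ (dlt n) (dlt_cont n) ?_ ?_ (phi n) (phi_cont n)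
    (tht n) ?_ ?_ ?_ (key_A n) incl ?_ (prj n) ?_ ?_ (rscale n) ?_ ?_ ?_ ?_ d F hF x
  · refine thin_of_embedding (E := Fin k → ℝ) (n + 1) (fun y i => (y i : ℝ)) (by fun_prop) ?_ ?_
    · intro a b h
      funext i
      exact Subtype.ext (congrFun h i)
    · simp; omega
  · refine thin_of_embedding (E := ℝ × (Fin k → ℝ)) (n + 1)
      (fun y => ((y.1 : ℝ), fun i => (y.2 i : ℝ))) (by fun_prop) ?_ ?_
    · rintro ⟨a, a'⟩ ⟨b, b'⟩ h
      simp only [Prod.mk.injEq] at h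
      refine Prod.ext (Subtype.ext h.1) (funext fun i => Subtype.ext (congrFun h.2 i))
    · simp; omega
  · intro p
    obtain ⟨v, hv, rfl⟩ := cpT_surj p
    rw [dlt, cpLift_cpT _ _ v hv]
    positivity
  · intro p
    obtain ⟨v, hv, rfl⟩ := cpT_surj p
    rw [dlt, cpLift_cpT _ _ v hv, div_le_one (max_pos' hv)]
    exact le_max_left _ _
  · rw [continuous_iff_continuousAt]
    rintro ⟨u, p⟩
    obtain ⟨v, hv, rfl⟩ := cpT_surj p
    refine cpMap_contAt (fun (u : Fin (n + 1) → ℂ) v => mkv (zc v + wc v • u) (wc v)) _ ?_ u v hv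
      (trans_ne u hv)
    have h1 := zc_cont (n := n)
    have h2 := wc_cont (n := n)
    exact mkv_cont (by fun_prop) (by fun_prop)
  · intro p
    obtain ⟨v, hv, rfl⟩ := cpT_surj p
    rw [tht_cpT _ hv]
    simp
  · intro u u' p
    obtain ⟨v, hv, rfl⟩ := cpT_surj p
    rw [tht_cpT _ hv, tht_cpT _ (trans_ne _ hv), tht_cpT _ hv]
    congr 1
    apply vext
    · simp only [zc_mkv, wc_mkv, smul_add]
      abel
    · simp
  · intro y
    obtain ⟨v, hv, rfl⟩ := cpT_surj y
    rw [hI v hv, dlt_ne (hne v hv)]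
    simpa using hv
  · intro p hp
    obtain ⟨v, hv, rfl⟩ := cpT_surj p
    rw [dlt_ne hv] at hp
    have := cpMap_contAt (fun (_ : Unit) v => zc (n := n) v) (fun _ => zc_hom)
      (zc_cont.comp continuous_snd) () v hv hp
    exact ContinuousAt.comp (f := fun s : CP (n + 1) => ((), s)) this
      (continuous_const.prodMk continuous_id).continuousAt
  · intro y
    obtain ⟨v, hv, rfl⟩ := cpT_surj y
    rw [hI v hv, prj, cpMap_cpT _ _ _ (hne v hv), zc_mkv]
  · intro t p hp
    obtain ⟨v, hv, rfl⟩ := cpT_surj p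
    rw [dlt_ne hv] at hp
    refine cpMap_contAt (fun (t : unitInterval) v => mkv (zc v) (((t : ℝ) : ℂ) * wc v)) _ ?_ t v hv
      (fun h => hp (by simpa using congrArg zc h))
    have h1 := zc_cont (n := n)
    have h2 := wc_cont (n := n)
    exact mkv_cont (by fun_prop) (by fun_prop)
  · intro p hp
    obtain ⟨v, hv, rfl⟩ := cpT_surj p
    rw [dlt_ne hv] at hp
    rw [rscale, prj, cpMap_cpT _ _ v hv, cpMap_cpT _ _ v hv, hI _ hp]
    simp
  · intro p
    obtain ⟨v, hv, rfl⟩ := cpT_surj p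
    rw [rscale, cpMap_cpT _ _ v hv]
    simp
  · intro t y
    obtain ⟨v, hv, rfl⟩ := cpT_surj y
    rw [hI v hv, rscale, cpMap_cpT _ _ _ (hne v hv)]
    simp
end

section
/- For integers d ≥ 1, n ≥ 0, m ≥ 0 and 0 ≤ k ≤ 2·min(n, m), there is an isomorphism of homotopy groups π_k(SP^d(ℂP^n)) ≅ π_k(SP^d(ℂP^m)). In particular, for fixed d and k, the homotopy groups π_k(SP^d(ℂP^n)) are independent of n once 2n ≥ k (stability of the homotopy groups of the space of degree-d zero-cycles as the ambient dimension increases). -/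
open scoped Topology

namespace BaseChange
open scoped unitInterval Topology.Homotopy
variable {X : Type} [TopologicalSpace X] {k : ℕ}

/-- Sup-distance from the centre of the cube, normalised to be `1` on the boundary. -/
noncomputable def rho (x : Fin k → I) : ℝ := ‖fun i => 2 * (x i : ℝ) - 1‖

/-- Scaling about the centre of the cube, clamped. -/
noncomputable def sc (τ : ℝ) (x : Fin k → I) : Fin k → I :=
  fun i => Set.projIcc 0 1 zero_le_one (1 / 2 + (1 + τ) * ((x i : ℝ) - 1 / 2))

lemma rho_cont : Continuous (rho : (Fin k → I) → ℝ) := by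
  unfold rho; fun_prop

lemma rho_le (x : Fin k → I) : rho x ≤ 1 := by
  refine (pi_norm_le_iff_of_nonneg zero_le_one).2 fun i => ?_
  rw [Real.norm_eq_abs, abs_le]
  have := (x i).2.1; have := (x i).2.2
  constructor <;> linarith

lemma rho_boundary {x : Fin k → I} (hx : x ∈ Cube.boundary (Fin k)) : rho x = 1 := by
  refine le_antisymm (rho_le x) ?_
  obtain ⟨i, hi⟩ := hx
  refine le_trans ?_ (norm_le_pi_norm _ i)
  rcases hi with hi | hi <;> simp [hi]
  norm_num

lemma sc_zero (x : Fin k → I) : sc 0 x = x := by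
  funext i
  have : (1 / 2 + (1 + 0) * ((x i : ℝ) - 1 / 2)) = x i := by ring
  simp only [sc, this, Set.projIcc_val]

lemma sc_boundary {τ : ℝ} {x : Fin k → I} (h : (1 + τ) * rho x = 1) :
    sc τ x ∈ Cube.boundary (Fin k) := by
  have hr : rho x ≠ 0 := by rintro h0; simp [h0] at h
  have hne : (fun i => 2 * (x i : ℝ) - 1) ≠ 0 := by
    intro h0; exact hr (by simp [rho, h0])
  have : Nonempty (Fin k) := by
    by_contra hk
    rw [not_nonempty_iff] at hk
    exact hne (Subsingleton.elim _ _)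
  obtain ⟨i, hi⟩ := Finite.exists_max (fun i => ‖2 * (x i : ℝ) - 1‖)
  have h1 : rho x = ‖2 * (x i : ℝ) - 1‖ :=
    le_antisymm ((pi_norm_le_iff_of_nonneg (norm_nonneg _)).2 hi)
      (norm_le_pi_norm (fun i => 2 * (x i : ℝ) - 1) i)
  rw [Real.norm_eq_abs] at h1
  rw [h1] at h
  refine ⟨i, ?_⟩
  rcases abs_cases (2 * (x i : ℝ) - 1) with ⟨h2, _⟩ | ⟨h2, _⟩ <;> rw [h2] at h
  · right
    exact Set.projIcc_of_right_le _ (by nlinarith)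
  · left
    exact Set.projIcc_of_le_left _ (by nlinarith)

/-- The basic push operation. -/
noncomputable def cOp (f : (Fin k → I) → X) (γ : ℝ → X) (τ : ℝ) (x : Fin k → I) : X :=
  if (1 + τ) * rho x ≤ 1 then f (sc τ x) else γ ((1 + τ) * rho x - 1)

lemma cOp_cont {S : Type} [TopologicalSpace S] (f : S → (Fin k → I) → X) (γ : S → ℝ → X)
    (τ : S → ℝ) (x : S → Fin k → I) (hf : Continuous (Function.uncurry f))
    (hγ : Continuous (Function.uncurry γ)) (hτ : Continuous τ) (hx : Continuous x)
    (hb : ∀ s, ∀ y ∈ Cube.boundary (Fin k), f s y = γ s 0) :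
    Continuous fun s => cOp (f s) (γ s) (τ s) (x s) := by
  unfold cOp
  have hr := (rho_cont (k := k)).comp hx
  refine Continuous.if_le ?_ ?_ ((continuous_const.add hτ).mul hr)
    continuous_const ?_
  · refine hf.comp (continuous_id.prodMk ?_)
    refine continuous_pi fun i => ?_
    have : Continuous fun s => ((x s i : I) : ℝ) :=
      continuous_subtype_val.comp ((continuous_apply i).comp hx)
    have h2 : Continuous fun s => (1 / 2 + (1 + τ s) * ((x s i : ℝ) - 1 / 2)) := by fun_prop
    exact (continuous_projIcc (h := zero_le_one)).comp h2
  · refine hγ.comp (continuous_id.prodMk ?_)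
    exact ((continuous_const.add hτ).mul hr).sub continuous_const
  · intro s hs
    rw [hb s _ (sc_boundary hs), hs, sub_self]

lemma cOp_zero (f : (Fin k → I) → X) (γ : ℝ → X) (x : Fin k → I) : cOp f γ 0 x = f x := by
  simp [cOp, rho_le, sc_zero]

lemma cOp_boundary (f : (Fin k → I) → X) (γ : ℝ → X) {τ : ℝ} (hτ : 0 ≤ τ)
    (hb : ∀ y ∈ Cube.boundary (Fin k), f y = γ 0)
    {x : Fin k → I} (hx : x ∈ Cube.boundary (Fin k)) : cOp f γ τ x = γ τ := by
  rcases hτ.eq_or_lt with rfl | h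
  · rw [cOp_zero, hb x hx]
  · simp [cOp, rho_boundary hx, h]

/-- Free homotopy along `γ`. -/
def Along (γ : C(ℝ, X)) {a b : X} (F : Ω^ (Fin k) X a) (G : Ω^ (Fin k) X b) : Prop :=
  ∃ H : C(I × (Fin k → I), X), (∀ y, H (0, y) = F y) ∧ (∀ y, H (1, y) = G y) ∧
    ∀ t, ∀ y ∈ Cube.boundary (Fin k), H (t, y) = γ t

/-- Push of a loop along `γ`. -/
noncomputable def push (γ : C(ℝ, X)) {a b : X} (ha : γ 0 = a) (hb : γ 1 = b)
    (F : Ω^ (Fin k) X a) : Ω^ (Fin k) X b :=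
  ⟨⟨fun x => cOp F γ 1 x, by
    refine cOp_cont (fun _ => F) (fun _ => γ) (fun _ => 1) id ?_ ?_ continuous_const
      continuous_id ?_
    · exact F.1.continuous.comp continuous_snd
    · exact γ.continuous.comp continuous_snd
    · intro s y hy; rw [ha]; exact F.2 y hy⟩, by
    intro y hy
    show cOp F γ 1 y = b
    rw [cOp_boundary _ _ zero_le_one _ hy, hb]
    intro y hy; rw [ha]; exact F.2 y hy⟩

lemma along_push (γ : C(ℝ, X)) {a b : X} (ha : γ 0 = a) (hb : γ 1 = b)
    (F : Ω^ (Fin k) X a) : Along γ F (push γ ha hb F) := by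
  have hF : ∀ y ∈ Cube.boundary (Fin k), F y = γ 0 := by
    intro y hy; rw [ha]; exact F.2 y hy
  refine ⟨⟨fun p => cOp F γ p.1 p.2, ?_⟩, ?_, ?_, ?_⟩
  · refine cOp_cont (fun _ => F) (fun _ => γ) (fun p : I × (Fin k → I) => (p.1 : ℝ))
      (fun p => p.2) ?_ ?_ (by fun_prop) (by fun_prop) ?_
    · exact F.1.continuous.comp continuous_snd
    · exact γ.continuous.comp continuous_snd
    · intro s y hy; exact hF y hy
  · intro y; simpa using cOp_zero F γ y
  · intro y; simp [push]; rfl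
  · intro t y hy
    exact cOp_boundary _ _ t.2.1 hF hy

lemma push_unique (γ : C(ℝ, X)) {a b : X} (ha : γ 0 = a) (hb : γ 1 = b)
    (F : Ω^ (Fin k) X a) (G : Ω^ (Fin k) X b) (h : Along γ F G) :
    GenLoop.Homotopic (push γ ha hb F) G := by
  obtain ⟨H, h0, h1, hH⟩ := h
  have hs : ∀ s : I, ∀ y ∈ Cube.boundary (Fin k), H (s, y) = γ (s + 0) := by
    intro s y hy; rw [add_zero]; exact hH s y hy
  refine ⟨⟨⟨⟨fun p => cOp (fun y => H (p.1, y)) (fun t => γ (p.1 + t)) (1 - p.1) p.2, ?_⟩,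
    ?_, ?_⟩, ?_⟩⟩
  · refine cOp_cont (fun (p : I × (Fin k → I)) y => H (p.1, y))
      (fun (p : I × (Fin k → I)) t => γ (p.1 + t)) (fun p => 1 - (p.1 : ℝ))
      (fun p => p.2) ?_ ?_ (by fun_prop) (by fun_prop) ?_
    · exact H.continuous.comp (by fun_prop)
    · exact γ.continuous.comp (by fun_prop)
    · intro s y hy; exact hs s.1 y hy
  · intro y
    simp [h0, push]
  · intro y
    simp [cOp_zero, h1]
  · intro t y hy
    have h2 : (0 : ℝ) ≤ 1 - t := by have := t.2.2; linarith
    have := cOp_boundary (fun y => H (t, y)) (fun u => γ (t + u)) h2 (hs t) hy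
    simp only [ContinuousMap.coe_mk]
    refine this.trans ?_
    have e := (push γ ha hb F).2 y hy
    refine Eq.trans ?_ e.symm
    rw [add_sub_cancel, hb]

lemma along_symm (γ : C(ℝ, X)) {a b : X} {F : Ω^ (Fin k) X a} {G : Ω^ (Fin k) X b}
    (h : Along γ F G) : Along (γ.comp ⟨fun t => 1 - t, by fun_prop⟩) G F := by
  obtain ⟨H, h0, h1, hH⟩ := h
  refine ⟨H.comp ⟨fun p => (unitInterval.symm p.1, p.2), by fun_prop⟩, ?_, ?_, ?_⟩
  · intro y; simp [h1]
  · intro y; simp [h0]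
  · intro t y hy; simp [hH _ y hy]

lemma along_of_homotopic (γ : C(ℝ, X)) {a b : X} (ha : γ 0 = a) (hb : γ 1 = b)
    {F F' : Ω^ (Fin k) X a} (h : GenLoop.Homotopic F F') :
    GenLoop.Homotopic (push γ ha hb F) (push γ ha hb F') := by
  obtain ⟨H⟩ := h
  have hs : ∀ s : I, ∀ y ∈ Cube.boundary (Fin k), H (s, y) = γ 0 := by
    intro s y hy; rw [ha, H.eq_fst s hy]; exact F.2 y hy
  refine ⟨⟨⟨⟨fun p => cOp (fun y => H (p.1, y)) γ 1 p.2, ?_⟩, ?_, ?_⟩, ?_⟩⟩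
  · refine cOp_cont (fun (p : I × (Fin k → I)) y => H (p.1, y))
      (fun _ => γ) (fun p => 1)
      (fun p => p.2) ?_ ?_ (by fun_prop) (by fun_prop) ?_
    · exact H.continuous.comp (by fun_prop)
    · exact γ.continuous.comp (by fun_prop)
    · intro s y hy; exact hs s.1 y hy
  · intro y
    simp [push]
  · intro y
    simp [push]
  · intro t y hy
    have := cOp_boundary (fun y => H (t, y)) γ zero_le_one (hs t) hy
    simp only [ContinuousMap.coe_mk]
    refine this.trans ?_
    rw [hb]
    exact ((push γ ha hb F).2 y hy).symm

lemma push_push (γ : C(ℝ, X)) {a b : X} (ha : γ 0 = a) (hb : γ 1 = b)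
    (γ' : C(ℝ, X)) (hγ : γ' = γ.comp ⟨fun t => 1 - t, by fun_prop⟩) (ha' : γ' 0 = b)
    (hb' : γ' 1 = a) (F : Ω^ (Fin k) X a) :
    GenLoop.Homotopic (push γ' ha' hb' (push γ ha hb F)) F := by
  subst hγ
  exact push_unique _ _ _ _ _ (along_symm γ (along_push γ ha hb F))

/-- The change of basepoint bijection. -/
noncomputable def baseEquiv (γ : C(ℝ, X)) {a b : X} (ha : γ 0 = a) (hb : γ 1 = b) :
    π_ k X a ≃ π_ k X b where
  toFun := Quotient.map (push γ ha hb) fun _ _ h => along_of_homotopic γ ha hb h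
  invFun := Quotient.map (push (γ.comp ⟨fun t => 1 - t, by fun_prop⟩) (by simpa) (by simpa))
    fun _ _ h => along_of_homotopic _ _ _ h
  left_inv := by
    intro x
    induction x using Quotient.inductionOn with | _ F =>
    exact Quotient.sound (push_push γ ha hb _ rfl _ _ F)
  right_inv := by
    intro x
    induction x using Quotient.inductionOn with | _ F =>
    refine Quotient.sound (push_push _ _ _ γ ?_ _ _ F)
    ext t; simp

lemma along_trans (γ : C(ℝ, X)) {a b : X} (i : Fin k) {F F' : Ω^ (Fin k) X a}
    {G G' : Ω^ (Fin k) X b} (h : Along γ F G) (h' : Along γ F' G') :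
    Along γ (GenLoop.transAt i F F') (GenLoop.transAt i G G') := by
  obtain ⟨H, h0, h1, hH⟩ := h
  obtain ⟨H', h0', h1', hH'⟩ := h'
  refine ⟨⟨fun p => if (p.2 i : ℝ) ≤ 1 / 2
      then H (p.1, Function.update p.2 i <| Set.projIcc 0 1 zero_le_one (2 * p.2 i))
      else H' (p.1, Function.update p.2 i <| Set.projIcc 0 1 zero_le_one (2 * p.2 i - 1)), ?_⟩,
      ?_, ?_, ?_⟩
  · refine Continuous.if_le ?_ ?_ (by fun_prop) (by fun_prop) ?_
    · refine H.continuous.comp (continuous_fst.prodMk ?_)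
      exact continuous_snd.update i (continuous_projIcc.comp (by fun_prop))
    · refine H'.continuous.comp (continuous_fst.prodMk ?_)
      exact continuous_snd.update i (continuous_projIcc.comp (by fun_prop))
    · intro p hp
      rw [hH, hH']
      · exact ⟨i, Or.inl (by simp [hp])⟩
      · exact ⟨i, Or.inr (by simp [hp])⟩
  · intro y
    simp only [ContinuousMap.coe_mk, GenLoop.transAt, GenLoop.coe_copy, h0, h0']
  · intro y
    simp only [ContinuousMap.coe_mk, GenLoop.transAt, GenLoop.coe_copy, h1, h1']
  · rintro t y ⟨j, hj⟩
    simp only [ContinuousMap.coe_mk]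
    split_ifs with hle
    · refine hH _ _ ?_
      by_cases hij : j = i
      · subst hij
        refine ⟨j, ?_⟩
        rcases hj with hj | hj
        · left; simp [hj]
        · rw [hj] at hle; norm_num at hle
      · exact ⟨j, by simpa [hij] using hj⟩
    · refine hH' _ _ ?_
      by_cases hij : j = i
      · subst hij
        refine ⟨j, ?_⟩
        rcases hj with hj | hj
        · rw [hj] at hle; norm_num at hle
        · right; simp [hj]; norm_num
      · exact ⟨j, by simpa [hij] using hj⟩

lemma baseEquiv_mul (γ : C(ℝ, X)) {a b : X} (ha : γ 0 = a) (hb : γ 1 = b)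
    (x y : π_ (k + 1) X a) :
    baseEquiv γ ha hb (x * y) = baseEquiv γ ha hb x * baseEquiv γ ha hb y := by
  induction x using Quotient.inductionOn with | _ F =>
  induction y using Quotient.inductionOn with | _ G =>
  have e1 := HomotopyGroup.mul_spec (i := (0 : Fin (k + 1))) (p := F) (q := G)
  have e2 := HomotopyGroup.mul_spec (i := (0 : Fin (k + 1))) (p := push γ ha hb F)
    (q := push γ ha hb G)
  refine (congrArg (baseEquiv γ ha hb) e1).trans (Eq.trans ?_ e2.symm)
  refine Quotient.sound (push_unique _ _ _ _ _ ?_)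
  exact along_trans γ 0 (along_push _ _ _ _) (along_push _ _ _ _)

lemma joined_real {a b : X} (h : Joined a b) : ∃ γ : C(ℝ, X), γ 0 = a ∧ γ 1 = b :=
  ⟨⟨h.somePath.extend, h.somePath.continuous_extend⟩, by simp, by simp⟩

end BaseChange

namespace SPaux
variable {X X' : Type} [TopologicalSpace X] [TopologicalSpace X'] {d : ℕ}

/-- The quotient map onto the symmetric product. -/
def spmk (x : Fin d → X) : SP X d := Quotient.mk (SPSetoid X d) x

lemma spmk_surj : Function.Surjective (spmk : (Fin d → X) → SP X d) := Quotient.mk_surjective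

lemma spmk_cont : Continuous (spmk : (Fin d → X) → SP X d) := continuous_quotient_mk'

lemma spmk_eq {x x' : Fin d → X} : spmk x = spmk x' ↔ ∃ σ : Equiv.Perm (Fin d), x ∘ σ = x' :=
  Quotient.eq (r := SPSetoid X d)

lemma spmk_open : IsOpenMap (spmk : (Fin d → X) → SP X d) := by
  intro U hU
  refine isOpen_coinduced.2 ?_
  have : (spmk ⁻¹' (spmk '' U) : Set (Fin d → X)) =
      ⋃ σ : Equiv.Perm (Fin d), (fun x => x ∘ σ) ⁻¹' U := by
    ext x
    simp only [Set.mem_preimage, Set.mem_image, Set.mem_iUnion]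
    constructor
    · rintro ⟨u, hu, h⟩
      obtain ⟨σ, hσ⟩ := spmk_eq.1 h.symm
      exact ⟨σ, by rwa [hσ]⟩
    · rintro ⟨σ, hσ⟩
      exact ⟨_, hσ, (spmk_eq.2 ⟨σ, rfl⟩).symm⟩
  change IsOpen (spmk ⁻¹' (spmk '' U) : Set (Fin d → X))
  rw [this]
  exact isOpen_iUnion fun σ => hU.preimage (by fun_prop)

lemma spmk_oq : IsOpenQuotientMap (spmk : (Fin d → X) → SP X d) :=
  ⟨spmk_surj, spmk_cont, spmk_open⟩

/-- Functoriality of the symmetric product, as bare functions. -/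
def spmap (ψ : X → X') : SP X d → SP X' d :=
  Quotient.map (fun x => ψ ∘ x) (by rintro x y ⟨σ, rfl⟩; exact ⟨σ, rfl⟩)

@[simp] lemma spmap_mk (ψ : X → X') (x : Fin d → X) : spmap ψ (spmk x) = spmk (ψ ∘ x) := rfl

/-- Support of a cycle. -/
def supp (c : SP X d) : Set X := {q | ∃ x : Fin d → X, spmk x = c ∧ ∃ i, x i = q}

lemma mem_supp_mk {x : Fin d → X} {q : X} : q ∈ supp (spmk x) ↔ ∃ i, x i = q := by
  constructor
  · rintro ⟨x', h, i, rfl⟩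
    obtain ⟨σ, rfl⟩ := spmk_eq.1 h
    exact ⟨σ.symm i, by simp⟩
  · rintro h; exact ⟨x, rfl, h⟩

lemma supp_finite (c : SP X d) : (supp c).Finite := by
  obtain ⟨x, rfl⟩ := spmk_surj c
  refine (Set.finite_range x).subset ?_
  intro q hq; exact mem_supp_mk.1 hq

lemma isOpen_supp_subset {O : Set X} (hO : IsOpen O) : IsOpen {c : SP X d | supp c ⊆ O} := by
  refine isOpen_coinduced.2 ?_
  change IsOpen (spmk ⁻¹' {c : SP X d | supp c ⊆ O} : Set (Fin d → X))
  have : (spmk ⁻¹' {c : SP X d | supp c ⊆ O} : Set (Fin d → X)) = Set.univ.pi fun _ => O := by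
    ext x
    simp only [Set.mem_preimage, Set.mem_ofPred_eq, Set.mem_univ_pi]
    constructor
    · intro h i; exact h (mem_supp_mk.2 ⟨i, rfl⟩)
    · rintro h q hq
      obtain ⟨i, rfl⟩ := mem_supp_mk.1 hq
      exact h i
  rw [this]
  exact isOpen_set_pi Set.finite_univ fun _ _ => hO

lemma spmap_congr {ψ φ : X → X'} {c : SP X d} (h : ∀ q ∈ supp c, ψ q = φ q) :
    spmap ψ c = spmap φ c := by
  obtain ⟨x, rfl⟩ := spmk_surj c
  simp only [spmap_mk]
  congr 1
  funext i; exact h _ (mem_supp_mk.2 ⟨i, rfl⟩)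

lemma spmap_id (c : SP X d) : spmap (fun q => q) c = c := by
  obtain ⟨x, rfl⟩ := spmk_surj c; rfl

lemma spmap_comp {X'' : Type} [TopologicalSpace X''] (ψ : X → X') (φ : X' → X'') (c : SP X d) :
    spmap φ (spmap ψ c) = spmap (fun q => φ (ψ q)) c := by
  obtain ⟨x, rfl⟩ := spmk_surj c; rfl

lemma supp_spmap (ψ : X → X') (c : SP X d) : supp (spmap ψ c) = ψ '' supp c := by
  obtain ⟨x, rfl⟩ := spmk_surj c
  ext q
  simp [mem_supp_mk]

lemma spmap_continuousAt {Y : Type} [TopologicalSpace Y] {Ψ : Y → X → X'} {f : Y → SP X d}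
    {y : Y} (hf : ContinuousAt f y)
    (hΨ : ∀ q ∈ supp (f y), ContinuousAt (Function.uncurry Ψ) (y, q)) :
    ContinuousAt (fun y => spmap (Ψ y) (f y)) y := by
  have key : ContinuousAt (fun p : Y × SP X d => spmap (Ψ p.1) p.2) (y, f y) := by
    obtain ⟨x, hx⟩ := spmk_surj (f y)
    have hq : IsOpenQuotientMap (Prod.map (id : Y → Y) (spmk : (Fin d → X) → SP X d)) :=
      IsOpenQuotientMap.id.prodMap spmk_oq
    have h := hq.continuousAt_comp_iff (g := fun p : Y × SP X d => spmap (Ψ p.1) p.2)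
      (x := (y, x))
    simp only [Prod.map_apply, id_eq, hx] at h
    rw [← h]
    have h2 : ContinuousAt (fun p : Y × (Fin d → X) => (fun i => Ψ p.1 (p.2 i) : Fin d → X'))
        (y, x) := by
      refine continuousAt_pi.2 fun i => ?_
      refine ContinuousAt.comp (f := fun p : Y × (Fin d → X) => (p.1, p.2 i))
        (g := Function.uncurry Ψ) (hΨ _ ?_) (by fun_prop)
      rw [← hx]; exact mem_supp_mk.2 ⟨i, rfl⟩
    exact ContinuousAt.comp (g := spmk) spmk_cont.continuousAt h2
  exact ContinuousAt.comp (f := fun y => (y, f y)) key (continuousAt_id.prodMk hf)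

end SPaux

section Approx
open SPaux Module

lemma exists_cluster {X V : Type} [TopologicalSpace X] [T2Space X] [NormedAddCommGroup V]
    (T : X → V) (hT : Continuous T) (S : Set X) (hS : S.Finite) :
    ∃ (O : Set X) (j : X → X), IsOpen O ∧ S ⊆ O ∧
      ∀ q ∈ O, j q ∈ S ∧ (∀ᶠ q' in 𝓝 q, j q' = j q) ∧ ‖T (j q) - T q‖ ≤ 1 / 2 := by
  classical
  obtain ⟨U, hU, hd⟩ := hS.t2_separation
  let W : X → Set X := fun c => U c ∩ {q | ‖T c - T q‖ < 1 / 2}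
  have hWo : ∀ c, IsOpen (W c) := fun c =>
    (hU c).2.inter (isOpen_lt (by fun_prop) continuous_const)
  let j : X → X := fun q => if h : ∃ c ∈ S, q ∈ W c then h.choose else q
  have hj : ∀ c ∈ S, ∀ q ∈ W c, j q = c := by
    intro c hc q hq
    have h : ∃ c ∈ S, q ∈ W c := ⟨c, hc, hq⟩
    have hjq : j q = h.choose := dif_pos h
    rw [hjq]
    by_contra hne
    have := hd h.choose_spec.1 hc hne
    exact Set.disjoint_left.1 this h.choose_spec.2.1 hq.1
  refine ⟨⋃ c ∈ S, W c, j, isOpen_biUnion fun c _ => hWo c, ?_, ?_⟩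
  · intro c hc
    exact Set.mem_biUnion hc ⟨(hU c).1, by simp⟩
  · intro q hq
    obtain ⟨c, hc, hqc⟩ := Set.mem_iUnion₂.1 hq
    have e := hj c hc q hqc
    refine ⟨e ▸ hc, ?_, ?_⟩
    · filter_upwards [(hWo c).mem_nhds hqc] with q' hq'
      rw [e, hj c hc q' hq']
    · rw [e]; exact hqc.2.le

theorem approx {X V E Y : Type} [TopologicalSpace X] [T2Space X] [NormedAddCommGroup V]
    [NormedSpace ℝ V] [FiniteDimensional ℝ V] [NormedAddCommGroup E] [NormedSpace ℝ E]
    [FiniteDimensional ℝ E] [TopologicalSpace Y] [CompactSpace Y]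
    (emb : C(Y, E)) (ret : C(E, Y)) (hre : ∀ y, ret (emb y) = y)
    (hdim : finrank ℝ E < finrank ℝ V) {d : ℕ}
    (T : X → V) (hT : Continuous T) (f : C(Y, SP X d)) :
    ∃ w : Y → X → V, ∀ y, ∀ q ∈ supp (f y), ContinuousAt (Function.uncurry w) (y, q) ∧
      ‖w y q - T q‖ ≤ 1 ∧ w y q ≠ 0 := by
  classical
  choose O j hO hSO hj using fun y => exists_cluster T hT (supp (f y)) (supp_finite _)
  let N : Y → Set Y := fun y => {y' | supp (f y') ⊆ O y}
  have hN : ∀ y, IsOpen (N y) := fun y => (isOpen_supp_subset (hO y)).preimage f.continuous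
  obtain ⟨t, ht⟩ := isCompact_univ.elim_finite_subcover N hN
    (fun y _ => Set.mem_iUnion.2 ⟨y, hSO y⟩)
  have hK : IsClosed (Set.range emb) := (isCompact_range emb.continuous).isClosed
  obtain ⟨lam, hlam⟩ := SmoothPartitionOfUnity.exists_isSubordinate
    (modelWithCornersSelf ℝ E) hK
    (fun a : t => ret ⁻¹' N a) (fun a => (hN a).preimage ret.continuous) (by
      rintro _ ⟨y, rfl⟩
      obtain ⟨a, ha, hy⟩ := Set.mem_iUnion₂.1 (ht (Set.mem_univ y))
      exact Set.mem_iUnion.2 ⟨⟨a, ha⟩, by simpa [hre] using hy⟩)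
  have hsum : ∀ y, ∑ a : t, lam a (emb y) = 1 := by
    intro y
    have := lam.sum_eq_one (Set.mem_range_self y : emb y ∈ Set.range emb)
    rwa [finsum_eq_sum_of_fintype] at this
  -- the finitely many smooth maps
  let Sel : Set (t → X) := {s | ∀ a : t, s a ∈ supp (f a)}
  have hSel : Sel.Finite := by
    have := Set.Finite.pi (t := fun a : t => supp (f (a : Y))) (fun a => supp_finite _)
    refine this.subset fun s hs => ?_
    simp only [Set.mem_pi]; intro a _; exact hs a
  let W : (t → X) → E → V := fun s e => ∑ a : t, lam a e • T (s a)
  have hW : ∀ s, ContDiff ℝ 1 (W s) := by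
    intro s
    refine ContDiff.sum fun a _ => ContDiff.smul ?_ contDiff_const
    exact (contMDiff_iff_contDiff.1 (lam a).contMDiff).of_le (by norm_cast)
  have hdimU : dimH (⋃ s ∈ Sel, Set.range (W s)) < finrank ℝ V := by
    rw [dimH_bUnion hSel.countable]
    refine lt_of_le_of_lt (iSup₂_le fun s _ => (hW s).dimH_range_le) ?_
    exact_mod_cast hdim
  obtain ⟨e, he1, he2⟩ := (dense_compl_of_dimH_lt_finrank hdimU).inter_open_nonempty
    (Metric.ball 0 (1 / 2)) Metric.isOpen_ball ⟨0, by simp⟩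
  have he1 : ‖e‖ < 1 / 2 := by simpa using he1
  have hz : ∀ y, ∀ q ∈ supp (f y), ∀ a : t, lam a (emb y) ≠ 0 → q ∈ O a := by
    intro y q hq a ha
    have h1 : emb y ∈ tsupport (lam a) := subset_tsupport _ ha
    have h2 := hlam a h1
    simp only [Set.mem_preimage, hre] at h2
    exact h2 hq
  refine ⟨fun y q => (∑ a : t, lam a (emb y) • T (j a q)) - e, fun y q hq => ⟨?_, ?_, ?_⟩⟩
  · refine ContinuousAt.sub ?_ continuousAt_const
    refine tendsto_finsetSum _ fun a _ => ?_
    by_cases h : emb y ∈ tsupport (lam a)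
    · have h2 := hlam a h
      simp only [Set.mem_preimage, hre] at h2
      have hqO := h2 hq
      refine Filter.Tendsto.smul ?_ ?_
      · exact (((lam a).contMDiff.continuous.comp emb.continuous).comp continuous_fst).continuousAt
      · refine tendsto_const_nhds.congr' ?_
        have h3 := (hj a q hqO).2.1
        have h4 : Filter.Tendsto (Prod.snd : Y × X → X) (𝓝 (y, q)) (𝓝 q) := continuous_snd.tendsto _
        filter_upwards [h4.eventually h3] with p hp
        rw [hp]
    · have h3 : ∀ᶠ p : Y × X in 𝓝 (y, q), emb p.1 ∈ (tsupport (lam a))ᶜ :=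
        (emb.continuous.comp continuous_fst).continuousAt.eventually
          ((isClosed_tsupport _).isOpen_compl.mem_nhds h)
      have e0 : ∀ x, x ∈ (tsupport (lam a))ᶜ → lam a x = 0 := fun x hx => image_eq_zero_of_notMem_tsupport hx
      dsimp only
      rw [e0 _ h, zero_smul]
      refine tendsto_const_nhds.congr' ?_
      filter_upwards [h3] with p hp
      rw [e0 _ hp, zero_smul]
  · have h1 : (∑ a : t, lam a (emb y) • T (j a q)) - e - T q =
        (∑ a : t, lam a (emb y) • (T (j a q) - T q)) - e := by
      simp only [smul_sub, Finset.sum_sub_distrib, ← Finset.sum_smul, hsum, one_smul]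
      abel
    rw [h1]
    have h2 : ‖∑ a : t, lam a (emb y) • (T (j a q) - T q)‖ ≤ 1 / 2 := by
      calc _ ≤ ∑ a : t, ‖lam a (emb y) • (T (j a q) - T q)‖ := norm_sum_le _ _
        _ ≤ ∑ a : t, lam a (emb y) * (1 / 2) := by
          refine Finset.sum_le_sum fun a _ => ?_
          rw [norm_smul, Real.norm_of_nonneg (lam.nonneg a _)]
          by_cases h : lam a (emb y) = 0
          · simp [h]
          · exact mul_le_mul_of_nonneg_left (hj a q (hz y q hq a h)).2.2 (lam.nonneg a _)
        _ = 1 / 2 := by rw [← Finset.sum_mul, hsum, one_mul]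
    calc _ ≤ _ := norm_sub_le _ _
      _ ≤ 1 := by linarith
  · intro h0
    refine he2 ?_
    -- selection
    have hne : ∀ a : t, (supp (f (a : Y))).Nonempty := by
      intro a
      obtain ⟨_, _, i, _⟩ := hq
      obtain ⟨x, hx⟩ := spmk_surj (f (a : Y))
      exact ⟨x i, x, hx, i, rfl⟩
    let s : t → X := fun a => if q ∈ O a then j a q else (hne a).some
    have hs : s ∈ Sel := by
      intro a
      by_cases h : q ∈ O a
      · simp only [s, if_pos h]; exact (hj a q h).1
      · simp only [s, if_neg h]; exact (hne a).some_mem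
    refine Set.mem_iUnion₂.2 ⟨s, hs, emb y, ?_⟩
    rw [← sub_eq_zero, ← h0]
    simp only [W]
    congr 1
    refine Finset.sum_congr rfl fun a _ => ?_
    by_cases h : lam a (emb y) = 0
    · simp [h]
    · simp only [s, if_pos (hz y q hq a h)]
end Approx
namespace CPaux
variable {n : ℕ}

/-- Nonzero vectors. -/
abbrev NZ (n : ℕ) : Type := {v : Fin (n + 1) → ℂ // v ≠ 0}

/-- The quotient map onto projective space. -/
noncomputable def cmk (v : NZ n) : CP n := Quotient.mk (projectivizationSetoid ℂ (Fin (n + 1) → ℂ)) v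

lemma cmk_surj : Function.Surjective (cmk : NZ n → CP n) := Quotient.mk_surjective

lemma cmk_cont : Continuous (cmk : NZ n → CP n) := continuous_quotient_mk'

lemma cmk_eq {v w : NZ n} : cmk v = cmk w ↔ ∃ a : ℂˣ, a • w.1 = v.1 :=
  Projectivization.mk_eq_mk_iff ℂ v.1 w.1 v.2 w.2

lemma smul_ne {a : ℂˣ} {v : Fin (n + 1) → ℂ} (hv : v ≠ 0) : a • v ≠ 0 := by
  intro h
  apply hv
  have := congrArg (fun x => a⁻¹ • x) h
  simpa using this

lemma cmk_open : IsOpenMap (cmk : NZ n → CP n) := by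
  intro U hU
  refine isOpen_coinduced.2 ?_
  have : (cmk ⁻¹' (cmk '' U) : Set (NZ n)) =
      ⋃ a : ℂˣ, (fun v : NZ n => (⟨a • v.1, smul_ne v.2⟩ : NZ n)) ⁻¹' U := by
    ext x
    simp only [Set.mem_preimage, Set.mem_image, Set.mem_iUnion]
    constructor
    · rintro ⟨u, hu, h⟩
      obtain ⟨a, ha⟩ := cmk_eq.1 h
      exact ⟨a, by convert hu⟩
    · rintro ⟨a, ha⟩
      exact ⟨_, ha, cmk_eq.2 ⟨a, rfl⟩⟩
  change IsOpen (cmk ⁻¹' (cmk '' U) : Set (NZ n))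
  rw [this]
  refine isOpen_iUnion fun a => hU.preimage ?_
  refine Continuous.subtype_mk ?_ _
  exact continuous_subtype_val.const_smul a

lemma cmk_oq : IsOpenQuotientMap (cmk : NZ n → CP n) := ⟨cmk_surj, cmk_cont, cmk_open⟩

/-- A representative. -/
noncomputable def rep (q : CP n) : NZ n := (cmk_surj q).choose

@[simp] lemma cmk_rep (q : CP n) : cmk (rep q) = q := (cmk_surj q).choose_spec

/-- Invariance under scaling. -/
def Inv {Z : Type} (g : (Fin (n + 1) → ℂ) → Z) : Prop := ∀ (a : ℂˣ) v, g (a • v) = g v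

lemma Inv.rep {Z : Type} {g : (Fin (n + 1) → ℂ) → Z} (hg : Inv g) {q : CP n} {v : NZ n}
    (h : cmk v = q) : g (rep q).1 = g v.1 := by
  obtain ⟨a, ha⟩ := cmk_eq.1 (h.trans (cmk_rep q).symm)
  rw [← ha, hg]

lemma rep_continuousAt {P Z : Type} [TopologicalSpace P] [TopologicalSpace Z]
    {g : P → (Fin (n + 1) → ℂ) → Z} (hg : ∀ p, Inv (g p)) {p : P} {q : CP n}
    (hc : ContinuousAt (Function.uncurry g) (p, (rep q).1)) :
    ContinuousAt (fun x : P × CP n => g x.1 (rep x.2).1) (p, q) := by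
  have hq : IsOpenQuotientMap (Prod.map (id : P → P) (cmk : NZ n → CP n)) :=
    IsOpenQuotientMap.id.prodMap cmk_oq
  have h := hq.continuousAt_comp_iff (g := fun x : P × CP n => g x.1 (rep x.2).1)
    (x := (p, rep q))
  simp only [Prod.map_apply, id_eq, cmk_rep] at h
  rw [← h]
  have e : (fun x : P × CP n => g x.1 (rep x.2).1) ∘ Prod.map id cmk =
      fun x : P × NZ n => g x.1 x.2.1 := by
    funext x
    exact (hg x.1).rep rfl
  rw [e]
  exact ContinuousAt.comp (g := Function.uncurry g) (x := (p, rep q))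
    (f := fun x : P × NZ n => (x.1, x.2.1)) hc
    (continuous_fst.prodMk (continuous_subtype_val.comp continuous_snd)).continuousAt

lemma rep_continuous {Z : Type} [TopologicalSpace Z]
    {g : (Fin (n + 1) → ℂ) → Z} (hg : Inv g)
    (hc : ∀ v, v ≠ 0 → ContinuousAt g v) : Continuous (fun q : CP n => g (rep q).1) := by
  rw [← cmk_oq.continuous_comp_iff]
  have e : (fun q : CP n => g (rep q).1) ∘ cmk = fun v : NZ n => g v.1 := by
    funext x
    exact hg.rep rfl
  rw [e, continuous_iff_continuousAt]
  intro v
  exact (hc v.1 v.2).comp continuous_subtype_val.continuousAt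

open Classical in
/-- Total version of the quotient map, with a junk value at `0`. -/
noncomputable def pmk (v : Fin (n + 1) → ℂ) : CP n :=
  if h : v ≠ 0 then cmk ⟨v, h⟩ else cmk ⟨fun _ => 1, fun h => one_ne_zero (congrFun h 0)⟩

lemma pmk_of {v : Fin (n + 1) → ℂ} (h : v ≠ 0) : pmk v = cmk ⟨v, h⟩ := dif_pos h

lemma pmk_val (v : NZ n) : pmk v.1 = cmk v := pmk_of v.2

@[simp] lemma pmk_rep (q : CP n) : pmk (rep q).1 = q := by rw [pmk_val, cmk_rep]

lemma pmk_inv : Inv (pmk : (Fin (n + 1) → ℂ) → CP n) := by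
  intro a v
  by_cases h : v = 0
  · simp [h]
  · rw [pmk_of h, pmk_of (smul_ne h)]
    exact cmk_eq.2 ⟨a, rfl⟩

lemma pmk_continuousAt {v : Fin (n + 1) → ℂ} (h : v ≠ 0) :
    ContinuousAt (pmk : (Fin (n + 1) → ℂ) → CP n) v := by
  have ho : IsOpen {v : Fin (n + 1) → ℂ | v ≠ 0} := isOpen_ne
  have := (ho.isOpenEmbedding_subtypeVal.continuousAt_iff (x := (⟨v, h⟩ : NZ n))
    (g := (pmk : (Fin (n + 1) → ℂ) → CP n)))
  refine this.1 ?_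
  have e : (pmk : (Fin (n + 1) → ℂ) → CP n) ∘ Subtype.val = (cmk : NZ n → CP n) := by
    funext v; exact pmk_val v
  have h2 : ContinuousAt (cmk : NZ n → CP n) ⟨v, h⟩ := cmk_cont.continuousAt
  rw [← e] at h2
  exact h2

/-- The projector matrix. -/
noncomputable def proj (v : Fin (n + 1) → ℂ) (i j : Fin (n + 1)) : ℂ :=
  v i * (starRingEnd ℂ (v j)) / (‖v‖ : ℂ) ^ 2

lemma unit_norm_smul (a : ℂˣ) (v : Fin (n + 1) → ℂ) : ‖a • v‖ = ‖(a : ℂ)‖ * ‖v‖ := by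
  rw [Units.smul_def, norm_smul]

lemma proj_inv : Inv (proj : (Fin (n + 1) → ℂ) → Fin (n + 1) → Fin (n + 1) → ℂ) := by
  intro a v
  funext i j
  have h1 : (a : ℂ) * starRingEnd ℂ (a : ℂ) = (‖(a : ℂ)‖ : ℂ) ^ 2 := by
    rw [Complex.mul_conj, Complex.normSq_eq_norm_sq]; push_cast; rfl
  have h2 : ((‖(a : ℂ)‖ : ℂ) ^ 2) ≠ 0 := by simp
  simp only [proj, unit_norm_smul]
  simp only [Pi.smul_apply, Units.smul_def, smul_eq_mul, map_mul]
  push_cast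
  rw [mul_pow, ← h1, show (a : ℂ) * v i * ((starRingEnd ℂ) (a : ℂ) * (starRingEnd ℂ) (v j)) =
    ((a : ℂ) * (starRingEnd ℂ) (a : ℂ)) * (v i * (starRingEnd ℂ) (v j)) by ring]
  exact mul_div_mul_left _ _ (by rw [h1]; exact h2)

lemma proj_continuousAt {v : Fin (n + 1) → ℂ} (h : v ≠ 0) (i j : Fin (n + 1)) :
    ContinuousAt (fun v : Fin (n + 1) → ℂ => proj v i j) v := by
  unfold proj
  refine ContinuousAt.div ?_ ?_ ?_
  · have : Continuous fun v : Fin (n + 1) → ℂ => v i * (starRingEnd ℂ (v j)) :=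
      (continuous_apply i).mul (Complex.continuous_conj.comp (continuous_apply j))
    exact this.continuousAt
  · fun_prop
  · simpa using h

instance : T2Space (CP n) := by
  refine T2Space.of_injective_continuous
    (f := fun q : CP n => (proj (rep q).1 : Fin (n + 1) → Fin (n + 1) → ℂ)) ?_ ?_
  · intro q q' h
    rw [← cmk_rep q, ← cmk_rep q']
    have hv := (rep q).2
    have hw := (rep q').2
    set v := rep q
    set w := rep q'
    obtain ⟨j, hj⟩ := Function.ne_iff.1 hv
    have hj : v.1 j ≠ 0 := hj
    have hnv : ((‖v.1‖ : ℂ) ^ 2) ≠ 0 := by simpa using hv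
    have hnw : ((‖w.1‖ : ℂ) ^ 2) ≠ 0 := by simpa using hw
    have hcj : starRingEnd ℂ (v.1 j) ≠ 0 := by simpa using hj
    have key : ∀ i, v.1 i * starRingEnd ℂ (v.1 j) * (‖w.1‖ : ℂ) ^ 2 =
        w.1 i * starRingEnd ℂ (w.1 j) * (‖v.1‖ : ℂ) ^ 2 := by
      intro i
      have := congrFun (congrFun h i) j
      simp only [proj] at this
      rwa [div_eq_div_iff hnv hnw] at this
    have hwj : starRingEnd ℂ (w.1 j) ≠ 0 := by
      intro h0
      have := key j
      rw [h0] at this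
      simp only [mul_zero, zero_mul, mul_eq_zero] at this
      tauto
    refine cmk_eq.2 ⟨Units.mk0 (starRingEnd ℂ (w.1 j) * (‖v.1‖ : ℂ) ^ 2 /
      (starRingEnd ℂ (v.1 j) * (‖w.1‖ : ℂ) ^ 2)) (by
        refine div_ne_zero (mul_ne_zero hwj hnv) (mul_ne_zero hcj hnw)), ?_⟩
    funext i
    simp only [Units.smul_mk0, Pi.smul_apply, smul_eq_mul]
    rw [div_mul_eq_mul_div, div_eq_iff (mul_ne_zero hcj hnw)]
    linear_combination -key i
  · refine rep_continuous (g := proj) proj_inv fun v hv => ?_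
    exact continuousAt_pi.2 fun i => continuousAt_pi.2 fun j => proj_continuousAt hv i j

/-- The truncated affine coordinate. -/
noncomputable def Tv (v : Fin (n + 2) → ℂ) (i : Fin (n + 1)) : ℂ :=
  proj v i.castSucc (Fin.last _)

/-- Its descent to projective space. -/
noncomputable def T (q : CP (n + 1)) : Fin (n + 1) → ℂ := Tv (rep q).1

lemma T_cont : Continuous (T : CP (n + 1) → Fin (n + 1) → ℂ) := by
  refine rep_continuous (g := Tv) ?_ ?_
  · intro a v; funext i; simp only [Tv, proj_inv a v]
  · intro v hv
    exact continuousAt_pi.2 fun i => proj_continuousAt hv _ _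

/-- Affine translation of the first coordinates. -/
def zz (u : Fin (n + 1) → ℂ) (v : Fin (n + 2) → ℂ) : Fin (n + 1) → ℂ :=
  fun i => v i.castSucc + v (Fin.last _) * u i

/-- The deformation on vectors. -/
noncomputable def zs (p : ℝ × (Fin (n + 1) → ℂ)) (v : Fin (n + 2) → ℂ) : Fin (n + 2) → ℂ :=
  Fin.snoc (α := fun _ => ℂ) (zz ((p.1 : ℂ) • p.2) v) ((1 - (p.1 : ℂ)) * v (Fin.last _))

lemma zz_ne {v : Fin (n + 2) → ℂ} (hv : v ≠ 0) {w : Fin (n + 1) → ℂ} (hw : w ≠ 0)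
    (h : ‖w - Tv v‖ ≤ 1) : zz (w - Tv v) v ≠ 0 := by
  intro h0
  have hi : ∀ i : Fin (n + 1), v i.castSucc + v (Fin.last _) * (w i - Tv v i) = 0 :=
    fun i => congrFun h0 i
  by_cases hs : v (Fin.last _) = 0
  · apply hv
    funext i
    refine Fin.lastCases hs (fun i => ?_) i
    simpa [hs] using hi i
  by_cases hz : ∀ i : Fin (n + 1), ‖v i.castSucc‖ ≤ ‖v (Fin.last _)‖
  · have hn : ‖v‖ = ‖v (Fin.last _)‖ := by
      refine le_antisymm ((pi_norm_le_iff_of_nonneg (norm_nonneg _)).2 fun i => ?_)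
        (norm_le_pi_norm v _)
      exact Fin.lastCases le_rfl hz i
    apply hw
    funext i
    have h1 : v (Fin.last _) * Tv v i = v i.castSucc := by
      have h2 : v (Fin.last _) * starRingEnd ℂ (v (Fin.last _)) = (‖v‖ : ℂ) ^ 2 := by
        rw [hn, Complex.mul_conj, Complex.normSq_eq_norm_sq]; push_cast; rfl
      have h3 : ((‖v‖ : ℂ) ^ 2) ≠ 0 := by simpa using hv
      simp only [Tv, proj]
      rw [mul_div_assoc', div_eq_iff h3, ← h2]
      ring
    have h4 := hi i
    rw [mul_sub, h1] at h4
    have h5 : v (Fin.last _) * w i = 0 := by linear_combination h4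
    exact (mul_eq_zero.1 h5).resolve_left hs
  · push Not at hz
    obtain ⟨i, hi'⟩ := hz
    have h1 : v i.castSucc = - (v (Fin.last _) * (w i - Tv v i)) := by
      linear_combination hi i
    have h2 : ‖w i - Tv v i‖ ≤ 1 := (norm_le_pi_norm (w - Tv v) i).trans h
    rw [h1, norm_neg, norm_mul] at hi'
    have := norm_nonneg (v (Fin.last _))
    nlinarith

lemma zs_ne {v : Fin (n + 2) → ℂ} (hv : v ≠ 0) {u : Fin (n + 1) → ℂ}
    (h : zz u v ≠ 0) (t : ℝ) : zs (t, u) v ≠ 0 := by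
  intro h0
  have hl : (1 - (t : ℂ)) * v (Fin.last _) = 0 := by
    have := congrFun h0 (Fin.last _)
    simpa only [zs, Fin.snoc_last, Pi.zero_apply] using this
  have hz : zz ((t : ℂ) • u) v = 0 := by
    funext i
    have := congrFun h0 i.castSucc
    simpa only [zs, Fin.snoc_castSucc, Pi.zero_apply] using this
  rcases mul_eq_zero.1 hl with h1 | h1
  · have : (t : ℂ) = 1 := by linear_combination -h1
    rw [this, one_smul] at hz
    exact h hz
  · apply hv
    funext i
    refine Fin.lastCases h1 (fun i => ?_) i
    have := congrFun hz i
    simpa [zz, h1] using this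

lemma zz_smul (u : Fin (n + 1) → ℂ) (a : ℂˣ) (v : Fin (n + 2) → ℂ) :
    zz u (a • v) = a • zz u v := by
  funext i; simp [zz, Units.smul_def]; ring

lemma zs_smul (p : ℝ × (Fin (n + 1) → ℂ)) (a : ℂˣ) (v : Fin (n + 2) → ℂ) :
    zs p (a • v) = a • zs p v := by
  funext i
  refine Fin.lastCases ?_ (fun i => ?_) i
  · simp [zs, Units.smul_def]; ring
  · simp [zs, zz_smul]

lemma zz_cont : Continuous fun x : (Fin (n + 1) → ℂ) × (Fin (n + 2) → ℂ) => zz x.1 x.2 := by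
  unfold zz; fun_prop

lemma zs_cont : Continuous
    fun x : (ℝ × (Fin (n + 1) → ℂ)) × (Fin (n + 2) → ℂ) => zs x.1 x.2 := by
  unfold zs
  refine Continuous.finSnoc (A := fun _ => ℂ) ?_ (by fun_prop)
  refine zz_cont.comp (Continuous.prodMk (by fun_prop) continuous_snd)

/-- Compression to the hyperplane. -/
noncomputable def psi (u : Fin (n + 1) → ℂ) (q : CP (n + 1)) : CP n := pmk (zz u (rep q).1)

/-- Deformation. -/
noncomputable def Psi (p : ℝ × (Fin (n + 1) → ℂ)) (q : CP (n + 1)) : CP (n + 1) :=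
  pmk (zs p (rep q).1)

/-- Hyperplane inclusion. -/
noncomputable def inc (q : CP n) : CP (n + 1) :=
  pmk (Fin.snoc (α := fun _ => ℂ) (rep q).1 0)

lemma snoc_ne {v : Fin (n + 1) → ℂ} (hv : v ≠ 0) :
    (Fin.snoc (α := fun _ => ℂ) v 0 : Fin (n + 2) → ℂ) ≠ 0 := by
  intro h; apply hv; funext i
  simpa using congrFun h i.castSucc

lemma inc_inv : Inv fun v : Fin (n + 1) → ℂ => (pmk (Fin.snoc (α := fun _ => ℂ) v 0) : CP (n + 1)) := by
  intro a v
  dsimp only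
  rw [← pmk_inv a (Fin.snoc (α := fun _ => ℂ) v 0)]
  congr 1
  funext i
  refine Fin.lastCases ?_ (fun i => ?_) i <;> simp

lemma psi_inv (u : Fin (n + 1) → ℂ) : Inv fun v => (pmk (zz u v) : CP n) := by
  intro a v; dsimp only; rw [zz_smul, pmk_inv]

lemma Psi_inv (p : ℝ × (Fin (n + 1) → ℂ)) : Inv fun v => (pmk (zs p v) : CP (n + 1)) := by
  intro a v; dsimp only; rw [zs_smul, pmk_inv]

lemma inc_cont : Continuous (inc : CP n → CP (n + 1)) := by
  refine rep_continuous inc_inv fun v hv => ?_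
  refine ContinuousAt.comp (f := fun v : Fin (n + 1) → ℂ =>
    (Fin.snoc (α := fun _ => ℂ) v 0 : Fin (n + 2) → ℂ)) (pmk_continuousAt (snoc_ne hv)) ?_
  exact (Continuous.finSnoc (A := fun _ => ℂ) continuous_id continuous_const).continuousAt

lemma psi_continuousAt {u : Fin (n + 1) → ℂ} {q : CP (n + 1)} (h : zz u (rep q).1 ≠ 0) :
    ContinuousAt (fun x : (Fin (n + 1) → ℂ) × CP (n + 1) => psi x.1 x.2) (u, q) := by
  refine rep_continuousAt (g := fun u v => pmk (zz u v)) psi_inv ?_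
  exact ContinuousAt.comp (f := fun x : (Fin (n + 1) → ℂ) × (Fin (n + 2) → ℂ) => zz x.1 x.2)
    (pmk_continuousAt h) zz_cont.continuousAt

lemma Psi_continuousAt {t : ℝ} {u : Fin (n + 1) → ℂ} {q : CP (n + 1)}
    (h : zz u (rep q).1 ≠ 0) :
    ContinuousAt (fun x : (ℝ × (Fin (n + 1) → ℂ)) × CP (n + 1) => Psi x.1 x.2) ((t, u), q) := by
  refine rep_continuousAt (g := fun u v => pmk (zs u v)) Psi_inv ?_
  exact ContinuousAt.comp
    (f := fun x : (ℝ × (Fin (n + 1) → ℂ)) × (Fin (n + 2) → ℂ) => zs x.1 x.2)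
    (pmk_continuousAt (zs_ne (rep q).2 h t)) zs_cont.continuousAt

lemma Psi_zero (u : Fin (n + 1) → ℂ) (q : CP (n + 1)) : Psi (0, u) q = q := by
  have : zs (0, u) (rep q).1 = (rep q).1 := by
    funext i
    refine Fin.lastCases ?_ (fun i => ?_) i <;> simp [zs, zz]
  rw [Psi, this, pmk_rep]

lemma inc_eq {v : Fin (n + 1) → ℂ} (hv : v ≠ 0) :
    inc (pmk v) = pmk (Fin.snoc (α := fun _ => ℂ) v 0) :=
  inc_inv.rep (pmk_of hv).symm

lemma Psi_one {u : Fin (n + 1) → ℂ} {q : CP (n + 1)} (h : zz u (rep q).1 ≠ 0) :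
    Psi (1, u) q = inc (psi u q) := by
  rw [psi, inc_eq h, Psi]
  congr 1
  simp [zs]

lemma Psi_inc (p : ℝ × (Fin (n + 1) → ℂ)) (q : CP n) : Psi p (inc q) = inc q := by
  have h : cmk ⟨_, snoc_ne (rep q).2⟩ = inc q := (pmk_of (snoc_ne (rep q).2)).symm
  have := (Psi_inv p).rep h
  refine this.trans ?_
  rw [inc]
  congr 1
  funext i
  refine Fin.lastCases ?_ (fun i => ?_) i <;> simp [zs, zz]

lemma psi_inc (u : Fin (n + 1) → ℂ) (q : CP n) : psi u (inc q) = q := by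
  have h : cmk ⟨_, snoc_ne (rep q).2⟩ = inc q := (pmk_of (snoc_ne (rep q).2)).symm
  have := (psi_inv u).rep h
  refine this.trans ?_
  have : zz u (Fin.snoc (α := fun _ => ℂ) (rep q).1 0) = (rep q).1 := by
    funext i; simp [zz]
  rw [this, pmk_rep]

end CPaux

section Key
open SPaux CPaux Module unitInterval

/-- The inclusion of symmetric products. -/
noncomputable def J {n d : ℕ} : C(SP (CP n) d, SP (CP (n + 1)) d) :=
  ⟨spmap inc, by
    rw [continuous_iff_continuousAt]
    intro c
    exact spmap_continuousAt (Ψ := fun _ => inc) (f := id) continuousAt_id fun q _ =>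
      (inc_cont.comp continuous_snd).continuousAt⟩

theorem compression {n d : ℕ} {E Y : Type} [NormedAddCommGroup E] [NormedSpace ℝ E]
    [FiniteDimensional ℝ E] [TopologicalSpace Y] [CompactSpace Y]
    (emb : C(Y, E)) (ret : C(E, Y)) (hre : ∀ y, ret (emb y) = y)
    (hdim : finrank ℝ E ≤ 2 * n + 1) (f : C(Y, SP (CP (n + 1)) d)) :
    ∃ (g : C(Y, SP (CP n) d)) (F : C(I × Y, SP (CP (n + 1)) d)),
      (∀ y, F (0, y) = f y) ∧ (∀ y, F (1, y) = J (g y)) ∧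
      ∀ y c, f y = J c → g y = c ∧ ∀ t, F (t, y) = f y := by
  have hV : finrank ℝ (Fin (n + 1) → ℂ) = 2 * (n + 1) := by
    rw [finrank_pi_fintype]; simp [Complex.finrank_real_complex]; ring
  obtain ⟨w, hw⟩ := approx emb ret hre (V := Fin (n + 1) → ℂ) (by rw [hV]; omega) T T_cont f
  let u : Y → CP (n + 1) → Fin (n + 1) → ℂ := fun y q => w y q - T q
  have hu : ∀ y, ∀ q ∈ supp (f y), ContinuousAt (fun x : Y × CP (n + 1) => u x.1 x.2) (y, q) :=
    fun y q hq => ContinuousAt.sub (hw y q hq).1 (T_cont.comp continuous_snd).continuousAt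
  have hz : ∀ y, ∀ q ∈ supp (f y), zz (u y q) (rep q).1 ≠ 0 := fun y q hq =>
    zz_ne (rep q).2 (hw y q hq).2.2 (hw y q hq).2.1
  refine ⟨⟨fun y => spmap (fun q => psi (u y q) q) (f y), ?_⟩,
    ⟨fun p => spmap (fun q => Psi ((p.1 : ℝ), u p.2 q) q) (f p.2), ?_⟩, ?_, ?_, ?_⟩
  · rw [continuous_iff_continuousAt]
    intro y
    refine spmap_continuousAt (Ψ := fun y q => psi (u y q) q) f.continuous.continuousAt ?_
    intro q hq
    exact ContinuousAt.comp (f := fun x : Y × CP (n + 1) => (u x.1 x.2, x.2))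
      (psi_continuousAt (hz y q hq)) ((hu y q hq).prodMk continuousAt_snd)
  · rw [continuous_iff_continuousAt]
    rintro ⟨t, y⟩
    refine spmap_continuousAt (Ψ := fun (p : I × Y) q => Psi ((p.1 : ℝ), u p.2 q) q)
      (f := fun p : I × Y => f p.2) (f.continuous.comp continuous_snd).continuousAt ?_
    intro q hq
    have h1 : ContinuousAt (fun x : (I × Y) × CP (n + 1) => u x.1.2 x.2) ((t, y), q) :=
      ContinuousAt.comp (f := fun x : (I × Y) × CP (n + 1) => (x.1.2, x.2))
        (g := fun x : Y × CP (n + 1) => u x.1 x.2) (hu y q hq) (by fun_prop)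
    have h2 : ContinuousAt (fun x : (I × Y) × CP (n + 1) => (x.1.1 : ℝ)) ((t, y), q) := by
      fun_prop
    exact ContinuousAt.comp
      (f := fun x : (I × Y) × CP (n + 1) => (((x.1.1 : ℝ), u x.1.2 x.2), x.2))
      (g := fun x : (ℝ × (Fin (n + 1) → ℂ)) × CP (n + 1) => Psi x.1 x.2)
      (Psi_continuousAt (hz y q hq)) ((h2.prodMk h1).prodMk continuousAt_snd)
  · intro y
    simp only [ContinuousMap.coe_mk, Set.Icc.coe_zero, Psi_zero]
    exact spmap_id _
  · intro y
    simp only [ContinuousMap.coe_mk, Set.Icc.coe_one, J]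
    rw [spmap_comp]
    exact spmap_congr fun q hq => Psi_one (hz y q hq)
  · intro y c hc
    simp only [ContinuousMap.coe_mk, hc]
    simp only [J, ContinuousMap.coe_mk, spmap_comp, psi_inc, Psi_inc, spmap_id, implies_true,
      and_self]

end Key

section Final
open SPaux CPaux Module BaseChange
open scoped unitInterval Topology.Homotopy

variable {n d k : ℕ}

/-- Composition of a loop with `J`. -/
noncomputable def Jloop {a : SP (CP n) d} (F : Ω^ (Fin k) (SP (CP n) d) a) :
    Ω^ (Fin k) (SP (CP (n + 1)) d) (J a) :=
  ⟨J.comp F.1, fun y hy => congrArg J (F.2 y hy)⟩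

lemma Jloop_apply {a : SP (CP n) d} (F : Ω^ (Fin k) (SP (CP n) d) a) (y : Fin k → I) :
    Jloop F y = J (F y) := rfl

lemma Jloop_homotopic {a : SP (CP n) d} {F G : Ω^ (Fin k) (SP (CP n) d) a}
    (h : GenLoop.Homotopic F G) : GenLoop.Homotopic (Jloop F) (Jloop G) := by
  obtain ⟨H⟩ := h
  refine ⟨⟨⟨J.comp H.toContinuousMap, ?_, ?_⟩, ?_⟩⟩
  · intro y
    exact congrArg J (H.apply_zero y)
  · intro y
    exact congrArg J (H.apply_one y)
  · intro t y hy
    exact congrArg J (H.eq_fst t hy)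

/-- The map induced by `J` on homotopy groups. -/
noncomputable def Jpi (a : SP (CP n) d) :
    π_ k (SP (CP n) d) a → π_ k (SP (CP (n + 1)) d) (J a) :=
  Quotient.map Jloop fun _ _ h => Jloop_homotopic h

/-- The cube in Euclidean space. -/
def cubeEmb : C(Fin k → I, Fin k → ℝ) := ⟨fun y i => y i, by fun_prop⟩

/-- The retraction onto the cube. -/
noncomputable def cubeRet : C(Fin k → ℝ, Fin k → I) :=
  ⟨fun y i => Set.projIcc 0 1 zero_le_one (y i),
    continuous_pi fun i => continuous_projIcc.comp (continuous_apply i)⟩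

lemma cubeRet_emb (y : Fin k → I) : cubeRet (cubeEmb y) = y := by
  funext i
  exact Set.projIcc_val zero_le_one _

lemma Jpi_surj (hk : k ≤ 2 * n) (a : SP (CP n) d) :
    Function.Surjective (Jpi (k := k) a) := by
  intro x
  induction x using Quotient.inductionOn with | _ F =>
  obtain ⟨g, H, h0, h1, hb⟩ := compression (n := n) (cubeEmb (k := k)) cubeRet cubeRet_emb
    (by simp; omega) F.1
  refine ⟨Quotient.mk _ ⟨g, fun y hy => (hb y a (F.2 y hy)).1⟩, ?_⟩
  refine Quotient.sound (GenLoop.Homotopic.symm ?_)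
  refine ⟨⟨⟨H, ?_, ?_⟩, ?_⟩⟩
  · intro y; exact h0 y
  · intro y; exact h1 y
  · intro t y hy
    exact (hb y a (F.2 y hy)).2 t

lemma Jpi_inj (hk : k ≤ 2 * n) (a : SP (CP n) d) :
    Function.Injective (Jpi (k := k) a) := by
  intro x x' hx
  induction x using Quotient.inductionOn with | _ F =>
  induction x' using Quotient.inductionOn with | _ G =>
  have hh : GenLoop.Homotopic (Jloop F) (Jloop G) := Quotient.exact hx
  obtain ⟨H⟩ := hh
  obtain ⟨g, _, _, _, hb⟩ := compression (n := n) (Y := I × (Fin k → I)) (E := ℝ × (Fin k → ℝ))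
    ⟨fun p => ((p.1 : ℝ), cubeEmb p.2), by fun_prop⟩
    ⟨fun p => (Set.projIcc 0 1 zero_le_one p.1, cubeRet p.2),
      (continuous_projIcc.comp continuous_fst).prodMk (cubeRet.continuous.comp continuous_snd)⟩
    (fun p => Prod.ext (Set.projIcc_val zero_le_one _) (cubeRet_emb _))
    (by simp; omega) H.toContinuousMap
  refine Quotient.sound ⟨⟨⟨g, ?_, ?_⟩, ?_⟩⟩
  · intro y
    exact (hb (0, y) (F y) (H.apply_zero y)).1
  · intro y
    exact (hb (1, y) (G y) (H.apply_one y)).1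
  · intro t y hy
    exact (hb (t, y) (F y) (H.eq_fst t hy)).1

lemma Jpi_mul (a : SP (CP n) d) (x y : π_ (k + 1) (SP (CP n) d) a) :
    Jpi a (x * y) = Jpi a x * Jpi a y := by
  induction x using Quotient.inductionOn with | _ F =>
  induction y using Quotient.inductionOn with | _ G =>
  have e1 := HomotopyGroup.mul_spec (i := (0 : Fin (k + 1))) (p := F) (q := G)
  have e2 := HomotopyGroup.mul_spec (i := (0 : Fin (k + 1))) (p := Jloop F) (q := Jloop G)
  refine (congrArg (Jpi a) e1).trans (Eq.trans ?_ e2.symm)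
  refine congrArg (Quotient.mk _) ?_
  refine GenLoop.ext _ _ fun y => ?_
  rw [Jloop_apply]
  simp only [GenLoop.transAt, GenLoop.coe_copy]
  split_ifs <;> rfl

lemma sp_joined (a b : SP (CP n) d) : Joined a b := by
  have h1 : IsPathConnected ({0}ᶜ : Set (Fin (n + 1) → ℂ)) := by
    refine isPathConnected_compl_singleton_of_one_lt_rank ?_ 0
    rw [← Module.finrank_eq_rank, finrank_pi_fintype]
    simp only [Complex.finrank_real_complex, Finset.sum_const, Finset.card_univ,
      Fintype.card_fin, smul_eq_mul]
    norm_cast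
    omega
  have h2 : PathConnectedSpace (NZ n) := isPathConnected_iff_pathConnectedSpace.1 h1
  have h3 : ∀ p q : CP n, Joined p q := by
    intro p q
    obtain ⟨v, rfl⟩ := cmk_surj p
    obtain ⟨w, rfl⟩ := cmk_surj q
    exact ⟨(PathConnectedSpace.somePath v w).map cmk_cont⟩
  obtain ⟨v, rfl⟩ := spmk_surj a
  obtain ⟨w, rfl⟩ := spmk_surj b
  exact ⟨(Path.pi fun i => (h3 (v i) (w i)).somePath).map spmk_cont⟩

lemma base_mulEquiv (a b : SP (CP n) d) :
    Nonempty (π_ (k + 1) (SP (CP n) d) a ≃* π_ (k + 1) (SP (CP n) d) b) := by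
  obtain ⟨γ, ha, hb⟩ := joined_real (sp_joined a b)
  exact ⟨⟨baseEquiv γ ha hb, baseEquiv_mul γ ha hb⟩⟩

lemma base_equiv (a b : SP (CP n) d) :
    Nonempty (π_ k (SP (CP n) d) a ≃ π_ k (SP (CP n) d) b) := by
  obtain ⟨γ, ha, hb⟩ := joined_real (sp_joined a b)
  exact ⟨baseEquiv γ ha hb⟩

lemma stable_equiv {m : ℕ} (h : n ≤ m) (hk : k ≤ 2 * n) (a : SP (CP n) d) :
    ∀ b : SP (CP m) d, Nonempty (π_ k (SP (CP n) d) a ≃ π_ k (SP (CP m) d) b) := by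
  induction m, h using Nat.le_induction with
  | base => exact fun b => base_equiv a b
  | succ m hm ih =>
    intro b
    obtain ⟨c⟩ : Nonempty (SP (CP m) d) :=
      ⟨spmk fun _ => cmk ⟨fun _ => 1, fun h => one_ne_zero (congrFun h 0)⟩⟩
    obtain ⟨e⟩ := ih c
    obtain ⟨e'⟩ := base_equiv (k := k) (J c) b
    exact ⟨(e.trans (Equiv.ofBijective (Jpi c)
      ⟨Jpi_inj (by omega) c, Jpi_surj (by omega) c⟩)).trans e'⟩

lemma stable_mulEquiv {m : ℕ} (h : n ≤ m) (hk : k + 1 ≤ 2 * n) (a : SP (CP n) d) :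
    ∀ b : SP (CP m) d,
      Nonempty (π_ (k + 1) (SP (CP n) d) a ≃* π_ (k + 1) (SP (CP m) d) b) := by
  induction m, h using Nat.le_induction with
  | base => exact fun b => base_mulEquiv a b
  | succ m hm ih =>
    intro b
    obtain ⟨c⟩ : Nonempty (SP (CP m) d) :=
      ⟨spmk fun _ => cmk ⟨fun _ => 1, fun h => one_ne_zero (congrFun h 0)⟩⟩
    obtain ⟨e⟩ := ih c
    obtain ⟨e'⟩ := base_mulEquiv (k := k) (J c) b
    let e0 : π_ (k + 1) (SP (CP m) d) c ≃* π_ (k + 1) (SP (CP (m + 1)) d) (J c) :=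
      ⟨Equiv.ofBijective (Jpi c) ⟨Jpi_inj (by omega) c, Jpi_surj (by omega) c⟩, Jpi_mul c⟩
    exact ⟨(e.trans e0).trans e'⟩

end Final

/-- **Stability** (case `p = 0` of the paper's stability theorem): for `d ≥ 1` and
`0 ≤ k ≤ 2·min(n, m)`, the homotopy groups `π_k(SP^d(ℂP^n))` and `π_k(SP^d(ℂP^m))` are
isomorphic; in particular, for fixed `d` and `k` they are independent of the ambient
dimension `n` once `2n ≥ k`. For `k ≥ 1` the isomorphism is one of groups, and for `k = 0`
(and indeed every `k` in range) there is a bijection of homotopy sets. -/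
theorem homotopy_groups_sp_cp_stable (d n m : ℕ) (hd : 1 ≤ d)
    (a : SP (CP n) d) (b : SP (CP m) d) :
    (∀ k : ℕ, k ≤ 2 * min n m →
      Nonempty ((π_ k (SP (CP n) d) a) ≃ (π_ k (SP (CP m) d) b))) ∧
    (∀ k : ℕ, k + 1 ≤ 2 * min n m →
      Nonempty ((π_ (k + 1) (SP (CP n) d) a) ≃* (π_ (k + 1) (SP (CP m) d) b))) := by
  rcases le_total n m with h | h
  · rw [min_eq_left h]
    exact ⟨fun k hk => stable_equiv h hk a b, fun k hk => stable_mulEquiv h hk a b⟩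
  · rw [min_eq_right h]
    exact ⟨fun k hk => (stable_equiv h hk b a).map Equiv.symm,
      fun k hk => (stable_mulEquiv h hk b a).map MulEquiv.symm⟩
end
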